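/- arXiv:1203.3187 — 2 statements merged into one kernel-verified Lean document; each statement's English description precedes it below -/
import Mathlib

section
/- For every integer n ≥ 1, the singly-refined ASM generating function with bulk parameters related by y = x+1 satisfies Z_n(x,x+1;z) = (x·z+1)^{n−1}·(x+1)^{(n−1)(n−2)/2}, as an identity of polynomials in ℤ[x,z]. In other words, Σ_{A an ASM of size n} x^{ν(A)}·(x+1)^{μ(A)}·z^{ρT(A)} = (xz+1)^{n−1}(x+1)^{(n−1)(n−2)/2}. -/
open Finset

/-- The `n × n` integer matrix encoded by `e`, with entries in `{-1, 0, 1}`. -/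
def asmMat {n : ℕ} (e : Fin n → Fin n → Fin 3) : Fin n → Fin n → ℤ :=
  fun i j => (e i j : ℤ) - 1

/-- `A` is an alternating sign matrix: all entries lie in `{-1, 0, 1}`, every
partial row sum and every partial column sum is `0` or `1` (equivalently, the
nonzero entries of each row and of each column alternate in sign), and every
complete row sum and column sum is `1`. -/
def IsASM {n : ℕ} (A : Fin n → Fin n → ℤ) : Prop :=
  (∀ i j, A i j = -1 ∨ A i j = 0 ∨ A i j = 1) ∧
  (∀ (i j : Fin n), (∑ j' ∈ univ.filter (fun j' : Fin n => j' ≤ j), A i j') = 0 ∨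
    (∑ j' ∈ univ.filter (fun j' : Fin n => j' ≤ j), A i j') = 1) ∧
  (∀ (i j : Fin n), (∑ i' ∈ univ.filter (fun i' : Fin n => i' ≤ i), A i' j) = 0 ∨
    (∑ i' ∈ univ.filter (fun i' : Fin n => i' ≤ i), A i' j) = 1) ∧
  (∀ i : Fin n, (∑ j, A i j) = 1) ∧
  (∀ j : Fin n, (∑ i, A i j) = 1)

/-- `ν(A)`, the number of generalized inversions of `A`. -/
def nuASM {n : ℕ} (A : Fin n → Fin n → ℤ) : ℕ :=
  (∑ i : Fin n, ∑ i' : Fin n, ∑ j : Fin n, ∑ j' : Fin n,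
      if i < i' ∧ j' ≤ j then A i j * A i' j' else 0).toNat

/-- `μ(A)`, the number of entries of `A` equal to `-1`. -/
def muASM {n : ℕ} (A : Fin n → Fin n → ℤ) : ℕ :=
  (univ.filter (fun p : Fin n × Fin n => A p.1 p.2 = -1)).card

/-- `ρT(A)`, the number of `0`'s to the left of the `1` in the top row of `A`. -/
def rhoT {n : ℕ} (A : Fin n → Fin n → ℤ) : ℕ :=
  (univ.filter (fun j : Fin n =>
    A ⟨0, j.pos⟩ j = 0 ∧ ∃ j' : Fin n, j < j' ∧ A ⟨0, j.pos⟩ j' = 1)).card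

/-- `ρR(A)`, the number of `0`'s below the `1` in the right-most column of `A`. -/
def rhoR {n : ℕ} (A : Fin n → Fin n → ℤ) : ℕ :=
  (univ.filter (fun i : Fin n =>
    A i ⟨n - 1, Nat.sub_lt i.pos Nat.one_pos⟩ = 0 ∧
      ∃ i' : Fin n, i' < i ∧ A i' ⟨n - 1, Nat.sub_lt i.pos Nat.one_pos⟩ = 1)).card

/-- `ρB(A)`, the number of `0`'s to the right of the `1` in the bottom row of `A`. -/
def rhoB {n : ℕ} (A : Fin n → Fin n → ℤ) : ℕ :=
  (univ.filter (fun j : Fin n =>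
    A ⟨n - 1, Nat.sub_lt j.pos Nat.one_pos⟩ j = 0 ∧
      ∃ j' : Fin n, j' < j ∧ A ⟨n - 1, Nat.sub_lt j.pos Nat.one_pos⟩ j' = 1)).card

/-- `ρL(A)`, the number of `0`'s above the `1` in the left-most column of `A`. -/
def rhoL {n : ℕ} (A : Fin n → Fin n → ℤ) : ℕ :=
  (univ.filter (fun i : Fin n =>
    A i ⟨0, i.pos⟩ = 0 ∧ ∃ i' : Fin n, i < i' ∧ A i' ⟨0, i.pos⟩ = 1)).card

open Classical in
/-- The quadruply-refined ASM generating function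
`Zqua_n(x,y;z1,z2,z3,z4) = Σ_A x^{ν(A)} y^{μ(A)} z1^{ρT(A)} z2^{ρR(A)} z3^{ρB(A)} z4^{ρL(A)}`. -/
noncomputable def Zqua (n : ℕ) {R : Type*} [CommRing R] (x y z1 z2 z3 z4 : R) : R :=
  ∑ e : Fin n → Fin n → Fin 3,
    if IsASM (asmMat e) then
      x ^ nuASM (asmMat e) * y ^ muASM (asmMat e) * z1 ^ rhoT (asmMat e) *
        z2 ^ rhoR (asmMat e) * z3 ^ rhoB (asmMat e) * z4 ^ rhoL (asmMat e)
    else 0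

/-- Adjacent-boundary doubly-refined generating function `Zadj_n(x,y;z1,z2)`. -/
noncomputable def Zadj (n : ℕ) {R : Type*} [CommRing R] (x y z1 z2 : R) : R :=
  Zqua n x y z1 1 1 z2

/-- Alternative adjacent-boundary doubly-refined generating function `Zbaradj_n(x,y;z1,z2)`. -/
noncomputable def Zbaradj (n : ℕ) {R : Type*} [CommRing R] (x y z1 z2 : R) : R :=
  Zqua n x y z1 z2 1 1

/-- Triply-refined generating function `Ztri_n(x,y;z1,z2,z3)`. -/
noncomputable def Ztri (n : ℕ) {R : Type*} [CommRing R] (x y z1 z2 z3 : R) : R :=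
  Zqua n x y z1 1 z2 z3

/-- Opposite-boundary doubly-refined generating function `Zopp_n(x,y;z1,z2)`. -/
noncomputable def Zopp (n : ℕ) {R : Type*} [CommRing R] (x y z1 z2 : R) : R :=
  Zqua n x y z1 1 z2 1

/-- Singly-refined generating function `Z_n(x,y;z)`. -/
noncomputable def Zsing (n : ℕ) {R : Type*} [CommRing R] (x y z : R) : R :=
  Zqua n x y z 1 1 1

/-- Unrefined generating function `Z_n(x,y)`.  Note `Zun 0 x y = 1`. -/
noncomputable def Zun (n : ℕ) {R : Type*} [CommRing R] (x y : R) : R :=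
  Zqua n x y 1 1 1 1


/-- The binomial transform `s ↦ ∑ i, pᵢ * (s choose i)` of a power series. -/
noncomputable def binomEval {R : Type*} [CommRing R] (p : PowerSeries R) (s : ℕ) : R :=
  ∑ i ∈ range (s + 1), PowerSeries.coeff i p * (s.choose i : R)

/-- The linear series `x + (1 + x) T`. -/
noncomputable def linSeries {R : Type*} [CommRing R] (x : R) : PowerSeries R :=
  PowerSeries.C x + PowerSeries.C (1 + x) * PowerSeries.X

section Algebra

variable {R : Type*} [CommRing R]

theorem binomEval_eq_sum_range (p : PowerSeries R) {s N : ℕ} (h : s < N) :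
    binomEval p s = ∑ i ∈ range N, PowerSeries.coeff i p * (s.choose i : R) := by
  refine sum_subset (range_subset_range.2 h) fun i _ hi => ?_
  rw [Nat.choose_eq_zero_of_lt (by simpa using hi), Nat.cast_zero, mul_zero]

theorem binomEval_one (s : ℕ) : binomEval (1 : PowerSeries R) s = 1 := by
  rw [binomEval, sum_eq_single 0] <;> simp +contextual [PowerSeries.coeff_one]

theorem binomEval_mk_pow (w : R) (s : ℕ) :
    binomEval (PowerSeries.mk fun i => w ^ i) s = (w + 1) ^ s := by
  simp [binomEval, add_pow]

theorem binomEval_succ (p : PowerSeries R) (s : ℕ) :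
    binomEval p (s + 1) - binomEval p s =
      ∑ i ∈ range (s + 1), PowerSeries.coeff (i + 1) p * (s.choose i : R) := by
  rw [binomEval_eq_sum_range p (Nat.lt_succ_self (s + 1)),
    binomEval_eq_sum_range p (show s < s + 1 + 1 by lia), sum_range_succ', sum_range_succ' _ (s + 1)]
  simp only [Nat.choose_succ_succ, Nat.cast_add, mul_add, sum_add_distrib, Nat.choose_zero_right]
  ring

theorem coeff_succ_linSeries_mul (x : R) (p : PowerSeries R) (i : ℕ) :
    PowerSeries.coeff (i + 1) (linSeries x * p) =
      x * PowerSeries.coeff (i + 1) p + (1 + x) * PowerSeries.coeff i p := by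
  simp [linSeries, add_mul, mul_assoc, PowerSeries.coeff_succ_X_mul]

theorem binomEval_linSeries_mul_succ_sub (x : R) (p : PowerSeries R) (s : ℕ) :
    binomEval (linSeries x * p) (s + 1) - binomEval (linSeries x * p) s =
      binomEval p s + x * binomEval p (s + 1) := by
  have h := binomEval_succ p s
  rw [sub_eq_iff_eq_add] at h
  rw [binomEval_succ, h]
  simp only [coeff_succ_linSeries_mul, add_mul, sum_add_distrib, mul_assoc, ← mul_sum]
  simp only [binomEval]
  ring

theorem coeff_linSeries_pow_mul_mk (x w : R) (m d : ℕ) :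
    PowerSeries.coeff (m + d) (linSeries x ^ m * PowerSeries.mk fun i => w ^ i) =
      (x * (w + 1) + 1) ^ m * w ^ d := by
  induction m generalizing d with
  | zero => simp
  | succ m ih =>
    rw [show m + 1 + d = (m + d) + 1 by lia, pow_succ', mul_assoc, coeff_succ_linSeries_mul,
      add_assoc, ih (d + 1), ih d]
    ring

theorem coeff_linSeries_pow_of_lt (x : R) {m i : ℕ} (h : m < i) :
    PowerSeries.coeff i (linSeries x ^ m) = 0 := by
  induction m generalizing i with
  | zero => simp [PowerSeries.coeff_one, h.ne']
  | succ m ih =>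
    obtain ⟨i, rfl⟩ : ∃ j, i = j + 1 := ⟨i - 1, by lia⟩
    rw [pow_succ', coeff_succ_linSeries_mul, ih (by lia), ih (by lia)]
    ring

theorem coeff_linSeries_pow_self (x : R) (m : ℕ) :
    PowerSeries.coeff m (linSeries x ^ m) = (x + 1) ^ m := by
  induction m with
  | zero => simp
  | succ m ih =>
    rw [pow_succ', coeff_succ_linSeries_mul, ih, coeff_linSeries_pow_of_lt x (Nat.lt_succ_self m)]
    ring

/-- The series whose binomial transforms span the alternant attached to `k` rows. -/
noncomputable def rowSeries (x w : R) (k a : ℕ) : PowerSeries R :=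
  linSeries x ^ a * if a + 1 = k then PowerSeries.mk fun i => w ^ i else 1

theorem rowSeries_succ_succ (x w : R) (k a : ℕ) :
    rowSeries x w (k + 1) (a + 1) = linSeries x * rowSeries x w k a := by
  simp only [rowSeries, pow_succ', mul_assoc, add_left_inj]

/-- The alternant attached to a top-to-bottom sequence of `k` rows with column sums supported on
`t`. -/
noncomputable def altMatrix (x w : R) {k : ℕ} (t : Fin k → ℕ) : Matrix (Fin k) (Fin k) R :=
  Matrix.of fun b a => binomEval (rowSeries x w k a) (t b)

theorem det_altMatrix_val (x w : R) (n : ℕ) :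
    (altMatrix x w (fun b : Fin (n + 1) => (b : ℕ))).det =
      (x * (w + 1) + 1) ^ n * (x + 1) ^ (n * (n - 1) / 2) := by
  have key : altMatrix x w (fun b : Fin (n + 1) => (b : ℕ)) =
      Matrix.of (fun b i : Fin (n + 1) => ((b : ℕ).choose i : R)) *
      Matrix.of (fun i a : Fin (n + 1) => PowerSeries.coeff i (rowSeries x w (n + 1) a)) := by
    ext b a
    rw [Matrix.mul_apply]
    simp only [altMatrix, Matrix.of_apply]
    rw [binomEval_eq_sum_range _ b.isLt, ← Fin.sum_univ_eq_sum_range]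
    exact sum_congr rfl fun i _ => mul_comm _ _
  rw [key, Matrix.det_mul, Matrix.det_of_isLowerTriangular, Matrix.det_of_isUpperTriangular]
  · simp only [Matrix.of_apply, Nat.choose_self, Nat.cast_one, prod_const_one, one_mul]
    rw [Fin.prod_univ_castSucc, mul_comm]
    congr 1
    · simpa [rowSeries] using coeff_linSeries_pow_mul_mk x w n 0
    · rw [← Finset.sum_range_id, ← prod_pow_eq_pow_sum, ← Fin.prod_univ_eq_prod_range]
      refine prod_congr rfl fun i _ => ?_
      simp [rowSeries, i.isLt.ne, coeff_linSeries_pow_self]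
  · intro i a h
    replace h : a < i := h
    have : (a : ℕ) + 1 ≠ n + 1 := by have := i.isLt; have : (a : ℕ) < i := h; lia
    simp only [Matrix.of_apply, rowSeries, if_neg this, mul_one]
    exact coeff_linSeries_pow_of_lt x h
  · intro b i h
    simp only [Matrix.of_apply]
    rw [Nat.choose_eq_zero_of_lt (show (b : ℕ) < i from h), Nat.cast_zero]

/-- The weight of an entry `s` of a row, interlaced between `a` and `b` in the next row. -/
def linkWeight {α : Type*} [LT α] [DecidableLT α] (x : R) (a b s : α) : R :=
  (if s < b then 1 else 0) + x * (if a < s then 1 else 0)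

theorem sum_linkWeight_mul_binomEval (x : R) (p : PowerSeries R) {n : ℕ} {a b : Fin n}
    (h : a < b) :
    ∑ s ∈ Icc a b, linkWeight x a b s * binomEval p s =
      binomEval (linSeries x * p) b - binomEval (linSeries x * p) a := by
  have hv : (a : ℕ) ≤ b := le_of_lt h
  have e1 : ∑ s ∈ Icc a b, linkWeight x a b s * binomEval p s =
      ∑ u ∈ Icc (a : ℕ) b, linkWeight x (a : ℕ) b u * binomEval p u := by
    rw [← Fin.map_valEmbedding_Icc, sum_map]
    rfl
  rw [e1, ← sum_Ico_sub _ hv]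
  simp only [binomEval_linSeries_mul_succ_sub, linkWeight, add_mul, sum_add_distrib, mul_assoc,
    ite_mul, one_mul, zero_mul, ← mul_sum, ← sum_filter]
  rw [sum_Ico_add' (binomEval p) (a : ℕ) b 1]
  congr 2
  · ext u
    simp only [mem_filter, mem_Icc, mem_Ico]
    lia
  · congr 1
    ext u
    simp only [mem_filter, mem_Icc, mem_Ico]
    lia

theorem det_altMatrix_succ (x w : R) {k : ℕ} (hk : 0 < k) (t : Fin (k + 1) → ℕ) :
    (altMatrix x w t).det =
      (Matrix.of fun b a : Fin k => binomEval (linSeries x * rowSeries x w k a) (t b.succ) -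
        binomEval (linSeries x * rowSeries x w k a) (t b.castSucc)).det := by
  have h0 : ∀ b, altMatrix x w t b 0 = 1 := fun b => by
    simp [altMatrix, rowSeries, hk.ne, binomEval_one]
  let B : Matrix (Fin (k + 1)) (Fin (k + 1)) R := Matrix.of fun b a =>
    Fin.cases (altMatrix x w t 0 a)
      (fun i => altMatrix x w t i.succ a - altMatrix x w t i.castSucc a) b
  rw [Matrix.det_eq_of_forall_row_eq_smul_add_pred (B := B) (fun _ => 1) (fun j => by simp [B])
    (fun i j => by simp [B]), Matrix.det_succ_column_zero, Fin.sum_univ_succ]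
  simp only [B, Matrix.of_apply, Fin.cases_succ, Fin.cases_zero, h0, sub_self, mul_zero, zero_mul,
    sum_const_zero, add_zero, Fin.val_zero, pow_zero, one_mul]
  congr 1
  ext b a
  simp [altMatrix, rowSeries_succ_succ]

theorem det_altMatrix_eq_sum (x w : R) {n k : ℕ} (hk : 0 < k) (t : Fin (k + 1) → Fin n)
    (ht : StrictMono t) :
    (altMatrix x w fun b => (t b : ℕ)).det =
      ∑ s ∈ Fintype.piFinset fun m : Fin k => Icc (t m.castSucc) (t m.succ),
        (∏ m, linkWeight x (t m.castSucc) (t m.succ) (s m)) *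
          (altMatrix x w fun b => (s b : ℕ)).det := by
  rw [det_altMatrix_succ x w hk]
  have := (Matrix.detRowAlternating (n := Fin k) (R := R)).toMultilinearMap.map_sum_finset
    (fun (m : Fin k) (s : Fin n) (a : Fin k) =>
      linkWeight x (t m.castSucc) (t m.succ) s * binomEval (rowSeries x w k a) s)
    (fun m : Fin k => Icc (t m.castSucc) (t m.succ))
  refine Eq.trans ?_ (this.trans ?_)
  · change _ = Matrix.det _
    congr 1
    ext b a
    rw [Finset.sum_apply, sum_linkWeight_mul_binomEval x _ (ht b.castSucc_lt_succ)]
    rfl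
  · refine sum_congr rfl fun s _ => ?_
    exact Matrix.det_mul_column _ _


end Algebra

/-- The `0`-`1` vector recording the values of `t`. -/
def valueVec {k n : ℕ} (t : Fin k → Fin n) (j : Fin n) : ℤ :=
  ∑ m, if t m = j then 1 else 0

/-- The partial sum of `r` up to and including position `J`. -/
def partialSum {n : ℕ} (r : Fin n → ℤ) (J : Fin n) : ℤ :=
  ∑ j, if j ≤ J then r j else 0

/-- `r` may occur as a row of an alternating sign matrix. -/
def IsASMRow {n : ℕ} (r : Fin n → ℤ) : Prop :=
  (∀ J, partialSum r J = 0 ∨ partialSum r J = 1) ∧ ∑ j, r j = 1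

/-- The rows `t` and `s` interlace. -/
def Interlaces {k n : ℕ} (t : Fin (k + 1) → Fin n) (s : Fin k → Fin n) : Prop :=
  ∀ m : Fin k, t m.castSucc ≤ s m ∧ s m ≤ t m.succ

section Interlacing

variable {k n : ℕ}

theorem sum_valueVec_mul (t : Fin k → Fin n) (f : Fin n → ℤ) :
    ∑ j, valueVec t j * f j = ∑ m, f (t m) := by
  simp only [valueVec, sum_mul, ite_mul, one_mul, zero_mul]
  rw [sum_comm]
  simp

theorem sum_valueVec (t : Fin k → Fin n) : ∑ j, valueVec t j = k := by
  simpa using sum_valueVec_mul t 1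

theorem valueVec_eq_ite {t : Fin k → Fin n} (ht : Function.Injective t) (j : Fin n) :
    valueVec t j = if j ∈ Set.range t then 1 else 0 := by
  classical
  rw [valueVec]
  split_ifs with h
  · obtain ⟨m, rfl⟩ := h
    simp [ht.eq_iff]
  · exact sum_eq_zero fun m _ => if_neg fun hm => h ⟨m, hm⟩

theorem valueVec_injOn {s t : Fin k → Fin n} (hs : StrictMono s) (ht : StrictMono t)
    (h : valueVec s = valueVec t) : s = t := by
  refine (StrictMono.range_inj hs ht).1 (Set.ext fun j => ?_)
  have := congrFun h j
  rw [valueVec_eq_ite hs.injective, valueVec_eq_ite ht.injective] at this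
  split_ifs at this <;> simp_all

theorem exists_strictMono_valueVec {f : Fin n → ℤ} (h01 : ∀ j, f j = 0 ∨ f j = 1)
    (hsum : ∑ j, f j = k) : ∃ t : Fin k → Fin n, StrictMono t ∧ f = valueVec t := by
  have hf : f = fun j => if f j = 1 then 1 else 0 := by
    ext j
    rcases h01 j with h | h <;> simp [h]
  have hcard : #{j | f j = 1} = k := by
    rw [hf, sum_boole] at hsum
    exact_mod_cast hsum
  refine ⟨orderEmbOfFin _ hcard, (orderEmbOfFin _ hcard).strictMono, ?_⟩
  ext j
  simp only [valueVec_eq_ite (orderEmbOfFin _ hcard).injective, range_orderEmbOfFin]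
  rcases h01 j with h | h <;> simp [h]

theorem partialSum_sub (r r' : Fin n → ℤ) (J : Fin n) :
    partialSum (fun j => r j - r' j) J = partialSum r J - partialSum r' J := by
  simp only [partialSum, ← sum_sub_distrib]
  exact sum_congr rfl fun j _ => by split_ifs <;> simp

theorem partialSum_valueVec (t : Fin k → Fin n) (J : Fin n) :
    partialSum (valueVec t) J = ∑ m, if t m ≤ J then 1 else 0 := by
  rw [← sum_valueVec_mul t fun j => if j ≤ J then 1 else 0]
  exact sum_congr rfl fun j _ => by simp

theorem lt_partialSum_valueVec {t : Fin k → Fin n} (ht : StrictMono t) {J : Fin n} {m : Fin k} :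
    (m : ℤ) < partialSum (valueVec t) J ↔ t m ≤ J := by
  rw [partialSum_valueVec, sum_boole]
  refine ⟨fun h => ?_, fun h => ?_⟩
  · by_contra! hm
    have : ({i | t i ≤ J} : Finset (Fin k)) ⊆ Iio m := fun i hi => by
      simp only [mem_filter, mem_univ, true_and] at hi
      exact mem_Iio.2 (ht.lt_iff_lt.1 (hi.trans_lt hm))
    have := card_le_card this
    rw [Fin.card_Iio] at this
    norm_cast at h
    lia
  · have : Iic m ⊆ ({i | t i ≤ J} : Finset (Fin k)) := fun i hi => by
      simp only [mem_filter, mem_univ, true_and]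
      exact (ht.monotone (mem_Iic.1 hi)).trans h
    have := card_le_card this
    rw [Fin.card_Iic] at this
    norm_cast

theorem partialSum_valueVec_apply {s : Fin k → Fin n} (hs : StrictMono s) (m : Fin k) :
    partialSum (valueVec s) (s m) = m + 1 := by
  rw [partialSum_valueVec, sum_boole]
  have : ({i | s i ≤ s m} : Finset (Fin k)) = Iic m := by
    ext i
    simp [hs.le_iff_le]
  rw [this, Fin.card_Iic]
  push_cast
  rfl

theorem isASMRow_iff_interlaces {t : Fin (k + 1) → Fin n} {s : Fin k → Fin n} (ht : StrictMono t)
    (hs : StrictMono s) :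
    IsASMRow (fun j => valueVec t j - valueVec s j) ↔ Interlaces t s := by
  refine ⟨fun ⟨h, _⟩ m => ⟨?_, ?_⟩, fun h => ⟨fun J => ?_, ?_⟩⟩
  · rw [← lt_partialSum_valueVec ht]
    have := h (s m)
    rw [partialSum_sub, partialSum_valueVec_apply hs] at this
    rw [Fin.val_castSucc]
    lia
  · rw [← lt_partialSum_valueVec hs]
    have := h (t m.succ)
    rw [partialSum_sub, partialSum_valueVec_apply ht, Fin.val_succ] at this
    push_cast at this
    lia
  · rw [partialSum_sub, partialSum_valueVec, partialSum_valueVec]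
    have h1 : (∑ m : Fin k, if t m.succ ≤ J then (1 : ℤ) else 0) ≤
        ∑ m, if s m ≤ J then (1 : ℤ) else 0 := sum_le_sum fun m _ => by
      have := (h m).2
      split_ifs <;> lia
    have h2 : (∑ m, if s m ≤ J then (1 : ℤ) else 0) ≤
        ∑ m : Fin k, if t m.castSucc ≤ J then (1 : ℤ) else 0 := sum_le_sum fun m _ => by
      have := (h m).1
      split_ifs <;> lia
    have e1 := Fin.sum_univ_succ fun m => if t m ≤ J then (1 : ℤ) else 0
    have e2 := Fin.sum_univ_castSucc fun m => if t m ≤ J then (1 : ℤ) else 0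
    have : (if t 0 ≤ J then (1 : ℤ) else 0) ≤ 1 := by split_ifs <;> simp
    have : 0 ≤ (if t (Fin.last k) ≤ J then (1 : ℤ) else 0) := by split_ifs <;> simp
    lia
  · rw [sum_sub_distrib, sum_valueVec, sum_valueVec]
    simp

theorem Interlaces.sum_valueVec_mul_partialSum {t : Fin (k + 1) → Fin n} {s : Fin k → Fin n}
    (ht : StrictMono t) (hs : StrictMono s) (h : Interlaces t s) :
    ∑ j, valueVec s j * partialSum (fun j => valueVec t j - valueVec s j) j =
      (#{m : Fin k | s m = t m.succ} : ℕ) := by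
  rw [sum_valueVec_mul, ← sum_boole]
  refine sum_congr rfl fun m _ => ?_
  have h1 := ((isASMRow_iff_interlaces ht hs).2 h).1 (s m)
  have h2 := lt_partialSum_valueVec ht (J := s m) (m := m.succ)
  rw [partialSum_sub, partialSum_valueVec_apply hs] at *
  rw [Fin.val_succ] at h2
  have h3 : s m = t m.succ ↔ t m.succ ≤ s m := ⟨fun e => e.ge, fun e => le_antisymm (h m).2 e⟩
  rw [← h3] at h2
  push_cast at h2
  split_ifs <;> lia

theorem Interlaces.card_neg_one {t : Fin (k + 1) → Fin n} {s : Fin k → Fin n}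
    (ht : StrictMono t) (hs : StrictMono s) (h : Interlaces t s) :
    #{j | valueVec t j - valueVec s j = -1} =
      #{m : Fin k | t m.castSucc < s m ∧ s m < t m.succ} := by
  rw [← card_map ⟨s, hs.injective⟩]
  congr 1
  ext j
  simp only [mem_filter, mem_univ, true_and, mem_map, Function.Embedding.coeFn_mk,
    valueVec_eq_ite ht.injective, valueVec_eq_ite hs.injective]
  constructor
  · intro hj
    by_cases h1 : j ∈ Set.range s
    · obtain ⟨m, rfl⟩ := h1
      have h2 : s m ∉ Set.range t := fun h2 => by simp [h2] at hj
      exact ⟨m, ⟨(h m).1.lt_of_ne fun e => h2 ⟨_, e⟩, (h m).2.lt_of_ne fun e => h2 ⟨_, e.symm⟩⟩, rfl⟩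
    · rw [if_neg h1] at hj
      split_ifs at hj <;> simp at hj
  · rintro ⟨m, ⟨h1, h2⟩, rfl⟩
    rw [if_pos (Set.mem_range_self m), if_neg]
    · rfl
    · rintro ⟨i, hi⟩
      rw [← hi, ht.lt_iff_lt] at h1 h2
      rw [Fin.lt_def] at h1 h2
      simp at h1 h2
      lia

theorem Interlaces.prod_linkWeight {R : Type*} [CommRing R] (x : R) {t : Fin (k + 1) → Fin n}
    {s : Fin k → Fin n} (ht : StrictMono t) (h : Interlaces t s) :
    ∏ m, linkWeight x (t m.castSucc) (t m.succ) (s m) =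
      x ^ #{m : Fin k | s m = t m.succ} *
        (x + 1) ^ #{m : Fin k | t m.castSucc < s m ∧ s m < t m.succ} := by
  simp only [← prod_const, prod_filter, ← prod_mul_distrib]
  refine prod_congr rfl fun m _ => ?_
  have h0 := ht m.castSucc_lt_succ
  obtain ⟨h1, h2⟩ := h m
  rw [linkWeight]
  rcases h1.eq_or_lt with h1 | h1
  · rw [← h1]
    simp [h0, h0.ne]
  · rcases h2.eq_or_lt with h2 | h2
    · rw [h2]
      simp [h0]
    · simp [h1, h2, h2.ne, add_comm]

end Interlacing

/-- The integer matrix encoded by `e`, for possibly rectangular shapes. -/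
def decode {k n : ℕ} (e : Fin k → Fin n → Fin 3) : Fin k → Fin n → ℤ :=
  fun i j => (e i j : ℤ) - 1

/-- `A` may occur as the matrix of the top `k` rows of an alternating sign matrix. -/
def IsPartialASM {k n : ℕ} (A : Fin k → Fin n → ℤ) : Prop :=
  (∀ i, IsASMRow (A i)) ∧
    ∀ (m : ℕ) j, (∑ i : Fin k, if (i : ℕ) < m then A i j else 0) = 0 ∨
      (∑ i : Fin k, if (i : ℕ) < m then A i j else 0) = 1

/-- The signed count of generalized inversions. -/
def inversionSum {k n : ℕ} (A : Fin k → Fin n → ℤ) : ℤ :=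
  ∑ i : Fin k, ∑ i' : Fin k, ∑ j : Fin n, ∑ j' : Fin n,
    if i < i' ∧ j' ≤ j then A i j * A i' j' else 0

/-- The number of entries equal to `-1`. -/
def negCount {k n : ℕ} (A : Fin k → Fin n → ℤ) : ℕ :=
  #{p : Fin k × Fin n | A p.1 p.2 = -1}

/-- The number of zeros of `r` with a `1` to their right. -/
def leadingZeros {n : ℕ} (r : Fin n → ℤ) : ℕ :=
  #{j | r j = 0 ∧ ∃ j', j < j' ∧ r j' = 1}

section PartialASM

variable {k n : ℕ}

theorem sum_col_eq_zero_or_one {A : Fin k → Fin n → ℤ} (h : IsPartialASM A) (j : Fin n) :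
    ∑ i, A i j = 0 ∨ ∑ i, A i j = 1 := by
  simpa using h.2 k j

theorem isPartialASM_succ_iff (A : Fin (k + 1) → Fin n → ℤ) :
    IsPartialASM A ↔ IsPartialASM (Fin.init A) ∧ IsASMRow (A (Fin.last k)) ∧
      ∀ j, ∑ i, A i j = 0 ∨ ∑ i, A i j = 1 := by
  have key : ∀ (m : ℕ) j, m ≤ k → (∑ i : Fin (k + 1), if (i : ℕ) < m then A i j else 0) =
      ∑ i : Fin k, if (i : ℕ) < m then Fin.init A i j else 0 := fun m j hm => by
    rw [Fin.sum_univ_castSucc]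
    simp [Fin.init, hm.not_gt]
  constructor
  · refine fun h => ⟨⟨fun i => h.1 _, fun m j => ?_⟩, h.1 _, sum_col_eq_zero_or_one h⟩
    rcases le_total m k with hm | hm
    · rw [← key m j hm]
      exact h.2 m j
    · have e : (∑ i : Fin k, if (i : ℕ) < m then Fin.init A i j else 0) =
          ∑ i : Fin k, if (i : ℕ) < k then Fin.init A i j else 0 :=
        sum_congr rfl fun i _ => by rw [if_pos i.isLt, if_pos (i.isLt.trans_le hm)]
      rw [e, ← key k j le_rfl]
      exact h.2 k j
  · rintro ⟨h, hr, hc⟩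
    refine ⟨fun i => Fin.lastCases hr h.1 i, fun m j => ?_⟩
    rcases Nat.lt_or_ge k m with hm | hm
    · have e : (∑ i : Fin (k + 1), if (i : ℕ) < m then A i j else 0) = ∑ i, A i j :=
        sum_congr rfl fun i _ => if_pos (by have := i.isLt; lia)
      rw [e]
      exact hc j
    · rw [key m j hm]
      exact h.2 m j

theorem inversionSum_succ (A : Fin (k + 1) → Fin n → ℤ) :
    inversionSum A = inversionSum (Fin.init A) +
      ∑ j, (∑ i, Fin.init A i j) * partialSum (A (Fin.last k)) j := by
  have hlast : ∀ i' : Fin (k + 1), ¬ Fin.last k < i' := fun i' => (Fin.le_last i').not_gt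
  rw [inversionSum, Fin.sum_univ_castSucc]
  simp only [hlast, false_and, if_false, sum_const_zero, add_zero]
  simp only [Fin.sum_univ_castSucc (n := k), sum_add_distrib, Fin.castSucc_lt_castSucc_iff,
    Fin.castSucc_lt_last, true_and]
  congr 1
  rw [sum_comm]
  refine sum_congr rfl fun j _ => ?_
  rw [sum_mul]
  refine sum_congr rfl fun i _ => ?_
  rw [partialSum, mul_sum]
  exact sum_congr rfl fun j' _ => by simp [Fin.init]

theorem negCount_succ (A : Fin (k + 1) → Fin n → ℤ) :
    negCount A = negCount (Fin.init A) + #{j | A (Fin.last k) j = -1} := by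
  simp only [negCount, card_filter, Fintype.sum_prod_type]
  rw [Fin.sum_univ_castSucc]
  rfl

theorem inversionSum_nonneg {A : Fin k → Fin n → ℤ} (h : IsPartialASM A) :
    0 ≤ inversionSum A := by
  induction k with
  | zero => simp [inversionSum]
  | succ k ih =>
    obtain ⟨h1, h2, -⟩ := (isPartialASM_succ_iff A).1 h
    rw [inversionSum_succ]
    refine add_nonneg (ih h1) (sum_nonneg fun j _ => mul_nonneg ?_ ?_)
    · rcases sum_col_eq_zero_or_one h1 j with h | h <;> simp [h]
    · rcases h2.1 j with h | h <;> simp [h]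

theorem sum_sum_eq_card {A : Fin k → Fin n → ℤ} (h : IsPartialASM A) :
    ∑ j, ∑ i, A i j = k := by
  rw [sum_comm, sum_congr rfl fun i _ => (h.1 i).2]
  simp

theorem decode_injective (k n : ℕ) : Function.Injective (decode (k := k) (n := n)) := by
  intro e e' h
  ext i j
  have := congrFun (congrFun h i) j
  simp only [decode] at this
  lia

theorem exists_decode {A : Fin k → Fin n → ℤ} (h : ∀ i j, A i j = -1 ∨ A i j = 0 ∨ A i j = 1) :
    ∃ e, decode e = A := by
  refine ⟨fun i j => ⟨(A i j + 1).toNat, by have := h i j; lia⟩, ?_⟩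
  ext i j
  have := h i j
  simp only [decode]
  lia

theorem valueVec_eq_zero_or_one {t : Fin k → Fin n} (ht : StrictMono t) (j : Fin n) :
    valueVec t j = 0 ∨ valueVec t j = 1 := by
  rw [valueVec_eq_ite ht.injective]
  split_ifs <;> simp

/-- The weight of the top `k + 1` rows of an alternating sign matrix. -/
def topWeight {R : Type*} [CommRing R] (x z : R) (A : Fin (k + 1) → Fin n → ℤ) : R :=
  x ^ (inversionSum A).toNat * (x + 1) ^ negCount A * z ^ leadingZeros (A 0)

/-- `A` is a partial alternating sign matrix with column sums supported on the values of `t`. -/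
def HasColumnSums (A : Fin k → Fin n → ℤ) (t : Fin k → Fin n) : Prop :=
  IsPartialASM A ∧ (fun j => ∑ i, A i j) = valueVec t

theorem hasColumnSums_succ_iff (A : Fin (k + 1) → Fin n → ℤ) {t : Fin (k + 1) → Fin n}
    (ht : StrictMono t) :
    HasColumnSums A t ↔ ∃ s, (StrictMono s ∧ Interlaces t s) ∧ HasColumnSums (Fin.init A) s ∧
      A (Fin.last k) = fun j => valueVec t j - valueVec s j := by
  constructor
  · rintro ⟨h, hc⟩
    obtain ⟨h1, h2, -⟩ := (isPartialASM_succ_iff A).1 h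
    obtain ⟨s, hs, hsc⟩ := exists_strictMono_valueVec (sum_col_eq_zero_or_one h1)
      (sum_sum_eq_card h1)
    have hA : A (Fin.last k) = fun j => valueVec t j - valueVec s j := by
      rw [← hc, ← hsc]
      ext j
      simp [Fin.sum_univ_castSucc, Fin.init]
    exact ⟨s, ⟨hs, (isASMRow_iff_interlaces ht hs).1 (hA ▸ h2)⟩, ⟨h1, hsc⟩, hA⟩
  · rintro ⟨s, ⟨hs, hi⟩, ⟨h1, hsc⟩, hA⟩
    have hc : (fun j => ∑ i, A i j) = valueVec t := by
      ext j
      have := congrFun hsc j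
      simp only [Fin.init] at this
      rw [Fin.sum_univ_castSucc, hA, this]
      ring
    refine ⟨(isPartialASM_succ_iff A).2 ⟨h1, hA ▸ (isASMRow_iff_interlaces ht hs).2 hi,
      fun j => ?_⟩, hc⟩
    rw [congrFun hc j]
    exact valueVec_eq_zero_or_one ht j

variable {R : Type*} [CommRing R] (x z : R)

theorem topWeight_succ {A : Fin (k + 2) → Fin n → ℤ} {t : Fin (k + 2) → Fin n}
    {s : Fin (k + 1) → Fin n} (ht : StrictMono t) (hs : StrictMono s) (hi : Interlaces t s)
    (h : HasColumnSums (Fin.init A) s)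
    (hA : A (Fin.last (k + 1)) = fun j => valueVec t j - valueVec s j) :
    topWeight x z A = (∏ m, linkWeight x (t m.castSucc) (t m.succ) (s m)) *
      topWeight x z (Fin.init A) := by
  have h1 : ∑ j, (∑ i, Fin.init A i j) * partialSum (A (Fin.last (k + 1))) j =
      (#{m | s m = t m.succ} : ℕ) := by
    rw [hA, ← hi.sum_valueVec_mul_partialSum ht hs, ← h.2]
  rw [topWeight, topWeight, inversionSum_succ, h1,
    Int.toNat_add (inversionSum_nonneg h.1) (Int.natCast_nonneg _), Int.toNat_natCast,
    negCount_succ, hi.prod_linkWeight x ht, hA, hi.card_neg_one ht hs,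
    show Fin.init A 0 = A 0 from rfl]
  ring

open Classical in
/-- The generating function of the partial alternating sign matrices with column sums supported
on the values of `t`. -/
noncomputable def partialZ (t : Fin (k + 1) → Fin n) : R :=
  ∑ e, if HasColumnSums (decode e) t then topWeight x z (decode e) else 0

open Classical in
theorem partialZ_succ {t : Fin (k + 2) → Fin n} (ht : StrictMono t) :
    partialZ x z t = ∑ s with StrictMono s ∧ Interlaces t s,
      (∏ m, linkWeight x (t m.castSucc) (t m.succ) (s m)) * partialZ x z s := by
  have hterm : ∀ e : Fin (k + 2) → Fin n → Fin 3,
      (if HasColumnSums (decode e) t then topWeight x z (decode e) else 0) =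
      ∑ s with StrictMono s ∧ Interlaces t s,
        if HasColumnSums (decode (Fin.init e)) s ∧
          decode e (Fin.last (k + 1)) = fun j => valueVec t j - valueVec s j then
          (∏ m, linkWeight x (t m.castSucc) (t m.succ) (s m)) *
            topWeight x z (decode (Fin.init e)) else 0 := fun e => by
    split_ifs with h
    · obtain ⟨s, ⟨hs, hi⟩, h1, hA⟩ := (hasColumnSums_succ_iff _ ht).1 h
      rw [sum_eq_single_of_mem s (by simp [hs, hi]), if_pos ⟨h1, hA⟩]
      · exact topWeight_succ x z ht hs hi h1 hA
      · intro s' hs' hne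
        refine if_neg fun h' => hne ?_
        exact valueVec_injOn (mem_filter.1 hs').2.1 hs (h'.1.2.symm.trans h1.2)
    · refine (sum_eq_zero fun s hs => if_neg fun h' => h ?_).symm
      exact (hasColumnSums_succ_iff _ ht).2 ⟨s, (mem_filter.1 hs).2, h'⟩
  rw [partialZ, sum_congr rfl fun e _ => hterm e, sum_comm]
  refine sum_congr rfl fun s hs => ?_
  obtain ⟨hs, hi⟩ := (mem_filter.1 hs).2
  obtain ⟨r, hr⟩ := exists_decode (k := 1)
    (A := fun _ j => valueVec t j - valueVec s j) fun _ j => by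
      have := valueVec_eq_zero_or_one ht j
      have := valueVec_eq_zero_or_one hs j
      lia
  have hr' : ∀ r' : Fin n → Fin 3, decode (fun _ : Fin 1 => r') 0 =
      (fun j => valueVec t j - valueVec s j) ↔ r' = r 0 := fun r' => by
    rw [← congrFun hr 0]
    refine ⟨fun h => ?_, fun h => by rw [h]; rfl⟩
    refine congrFun (decode_injective 1 n (a₁ := fun _ => r') (a₂ := r) ?_) 0
    ext i j
    rw [Subsingleton.elim i 0, h]
  rw [← (Fin.snocEquiv fun _ => Fin n → Fin 3).sum_comp, Fintype.sum_prod_type, sum_comm, partialZ,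
    mul_sum]
  refine sum_congr rfl fun e _ => ?_
  have htop : ∀ r', Fin.init ((Fin.snocEquiv fun _ => Fin n → Fin 3) (r', e)) = e := fun r' =>
    Fin.init_snoc _ _
  have hlast : ∀ r', decode ((Fin.snocEquiv fun _ => Fin n → Fin 3) (r', e)) (Fin.last (k + 1)) =
      decode (fun _ : Fin 1 => r') 0 := fun r' => by
    ext j
    simp [decode]
  simp only [htop, hlast, hr', ite_and, sum_ite_irrel, sum_ite_eq', mem_univ, if_true,
    sum_const_zero, mul_ite, mul_zero]

theorem inversionSum_one_row (A : Fin 1 → Fin n → ℤ) : inversionSum A = 0 := by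
  simp [inversionSum]

theorem isASMRow_valueVec (t : Fin 1 → Fin n) : IsASMRow (valueVec t) := by
  refine ⟨fun J => ?_, by simpa using sum_valueVec t⟩
  rw [partialSum_valueVec, Fin.sum_univ_one]
  split_ifs <;> simp

theorem leadingZeros_valueVec (t : Fin 1 → Fin n) : leadingZeros (valueVec t) = t 0 := by
  rw [leadingZeros, ← Fin.card_Iio]
  congr 1
  ext j
  simp only [valueVec, Fin.sum_univ_one, mem_filter, mem_univ, true_and, mem_Iio,
    ite_eq_left_iff, ite_eq_right_iff]
  constructor
  · rintro ⟨-, j', hj, h⟩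
    obtain rfl : t 0 = j' := by
      by_contra hne
      simp [hne] at h
    exact hj
  · exact fun h => ⟨fun e => absurd e h.ne', t 0, h, by simp⟩

theorem partialZ_one_row (t : Fin 1 → Fin n) : partialZ x z t = z ^ (t 0 : ℕ) := by
  classical
  have ht : StrictMono t := Subsingleton.strictMono t
  obtain ⟨e, he⟩ := exists_decode (k := 1) (A := fun _ => valueVec t) fun _ j =>
    Or.inr (valueVec_eq_zero_or_one ht j)
  rw [partialZ, sum_eq_single_of_mem e (mem_univ _), if_pos, he, topWeight, inversionSum_one_row,
    leadingZeros_valueVec]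
  · have : negCount (fun _ : Fin 1 => valueVec t) = 0 := by
      rw [negCount, card_eq_zero, filter_eq_empty_iff]
      intro p _ hp
      have := valueVec_eq_zero_or_one ht p.2
      lia
    simp [this]
  · rw [he]
    refine ⟨⟨fun _ => isASMRow_valueVec t, fun m j => ?_⟩, by simp⟩
    rw [Fin.sum_univ_one]
    split_ifs
    · exact valueVec_eq_zero_or_one ht j
    · exact Or.inl rfl
  · refine fun e' _ hne => if_neg fun h => hne (decode_injective 1 n ?_)
    rw [he, ← h.2]
    ext i j
    rw [Fin.sum_univ_one, Subsingleton.elim i 0]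

theorem det_altMatrix_eq_zero {s : Fin (k + 1) → Fin n} {t : Fin (k + 2) → Fin n}
    (hi : Interlaces t s) (hs : ¬ StrictMono s) (w : R) :
    (altMatrix x w fun b => (s b : ℕ)).det = 0 := by
  cases k with
  | zero => exact absurd (Subsingleton.strictMono (α := Fin 1) s) hs
  | succ k =>
    rw [Fin.strictMono_iff_lt_succ] at hs
    push Not at hs
    obtain ⟨m, hm⟩ := hs
    have h1 := (hi m.castSucc).2
    have h2 := (hi m.succ).1
    have h3 : s m.castSucc = s m.succ := le_antisymm (h1.trans h2) hm
    refine Matrix.det_zero_of_row_eq (i := m.castSucc) (j := m.succ) m.castSucc_lt_succ.ne ?_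
    ext a
    simp [altMatrix, h3]

theorem partialZ_eq_det {t : Fin (k + 1) → Fin n} (ht : StrictMono t) :
    partialZ x z t = (altMatrix x (z - 1) fun b => (t b : ℕ)).det := by
  classical
  induction k with
  | zero => simp [partialZ_one_row, altMatrix, rowSeries, binomEval_mk_pow]
  | succ k ih =>
    rw [partialZ_succ x z ht, det_altMatrix_eq_sum x (z - 1) k.succ_pos t ht]
    refine sum_subset_zero_on_sdiff (fun s hs => ?_) (fun s hs => ?_) fun s hs => ?_
    · exact Fintype.mem_piFinset.2 fun m => mem_Icc.2 ((mem_filter.1 hs).2.2 m)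
    · simp only [mem_sdiff, Fintype.mem_piFinset, mem_Icc, mem_filter, mem_univ, true_and] at hs
      rw [det_altMatrix_eq_zero x hs.1 fun h => hs.2 ⟨h, hs.1⟩, mul_zero]
    · rw [ih (mem_filter.1 hs).2.1]

theorem isASM_iff_hasColumnSums (A : Fin n → Fin n → ℤ)
    (hA : ∀ i j, A i j = -1 ∨ A i j = 0 ∨ A i j = 1) :
    IsASM A ↔ HasColumnSums A id := by
  have hid : valueVec (id : Fin n → Fin n) = fun _ => 1 := by
    ext j
    simp [valueVec]
  simp only [IsASM, HasColumnSums, IsPartialASM, IsASMRow, partialSum, hid, funext_iff, sum_filter]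
  constructor
  · rintro ⟨-, h1, h2, h3, h4⟩
    refine ⟨⟨fun i => ⟨h1 i, h3 i⟩, fun m j => ?_⟩, h4⟩
    rcases Nat.eq_zero_or_pos m with rfl | hm
    · simp
    · rcases Nat.lt_or_ge n m with hn | hn
      · rw [sum_congr rfl fun i _ => if_pos (i.isLt.trans hn), h4 j]
        exact Or.inr rfl
      · have e : (∑ i : Fin n, if (i : ℕ) < m then A i j else 0) =
            ∑ i : Fin n, if i ≤ ⟨m - 1, by lia⟩ then A i j else 0 :=
          sum_congr rfl fun i _ => if_congr (by rw [Fin.le_def]; simp; lia) rfl rfl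
        rw [e]
        exact h2 _ j
  · rintro ⟨⟨h1, h2⟩, h4⟩
    refine ⟨hA, fun i => (h1 i).1, fun i j => ?_, fun i => (h1 i).2, h4⟩
    simpa only [Fin.le_def, Nat.lt_succ_iff] using h2 ((i : ℕ) + 1) j

theorem Zsing_eq_partialZ (k : ℕ) :
    Zsing (k + 1) x (x + 1) z = partialZ x z (id : Fin (k + 1) → Fin (k + 1)) := by
  classical
  rw [Zsing, Zqua, partialZ]
  refine sum_congr rfl fun e _ => if_congr (isASM_iff_hasColumnSums _ fun i j => ?_) ?_ rfl
  · have := (e i j).isLt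
    simp only [asmMat]
    lia
  · simp only [one_pow, mul_one]
    rfl

end PartialASM

/-- The singly-refined ASM generating function at `y = x + 1`:
`Σ_A x^{ν(A)} (x+1)^{μ(A)} z^{ρT(A)} = (xz+1)^{n-1} (x+1)^{(n-1)(n-2)/2}`,
stated for all values of the variables in any commutative ring, equivalently
as an identity of polynomials in `ℤ[x,z]`. -/
theorem stmt14 {R : Type*} [CommRing R] (x z : R) (n : ℕ) (hn : 1 ≤ n) :
    Zsing n x (x + 1) z = (x * z + 1) ^ (n - 1) * (x + 1) ^ ((n - 1) * (n - 2) / 2) := by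
  obtain ⟨k, rfl⟩ : ∃ k, n = k + 1 := ⟨n - 1, by lia⟩
  rw [Zsing_eq_partialZ, partialZ_eq_det x z strictMono_id]
  simpa using det_altMatrix_val x (z - 1) k
end

section
/- For every integer n ≥ 3, the adjacent-boundary doubly-refined ASM generating function with bulk parameters related by y = x+1 satisfies: (x·z1·z2 + z1 + z2 − 1)·Zadj_n(x,x+1;z1,z2) = z1·z2·((x·z1+1)(x·z2+1))^{n−1}·(x+1)^{(n−2)(n−3)/2} − (z1−1)(z2−1)·(x+1)^{(n−1)(n−2)/2}, as an identity of polynomials in ℤ[x,z1,z2]. -/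
open Finset

open Classical in
/-- The functions `ℕ → ℕ → ℤ` with `a i j ∈ t i j` for `i, j < k` and `a i j = 0` otherwise. -/
noncomputable def boxPi (k : ℕ) (t : ℕ → ℕ → Finset ℤ) : Finset (ℕ → ℕ → ℤ) :=
  (Fintype.piFinset (fun q : Fin k × Fin k => t q.1 q.2)).image
    (fun f i j => if h : i < k ∧ j < k then f (⟨i, h.1⟩, ⟨j, h.2⟩) else 0)

theorem mem_boxPi {k : ℕ} {t : ℕ → ℕ → Finset ℤ} {a : ℕ → ℕ → ℤ} :
    a ∈ boxPi k t ↔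
      (∀ i j, i < k → j < k → a i j ∈ t i j) ∧ ∀ i j, ¬(i < k ∧ j < k) → a i j = 0 := by
  simp only [boxPi, mem_image, Fintype.mem_piFinset]
  constructor
  · rintro ⟨f, hf, rfl⟩
    refine ⟨fun i j hi hj => ?_, fun i j h => by simp [h]⟩
    simpa [hi, hj] using hf (⟨i, hi⟩, ⟨j, hj⟩)
  · rintro ⟨h1, h2⟩
    refine ⟨fun q => a q.1 q.2, fun q => h1 _ _ q.1.2 q.2.2, ?_⟩
    funext i j
    by_cases h : i < k ∧ j < k
    · simp [h]
    · simp [h, h2 i j h]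

theorem sum_boxPi {R : Type*} [CommRing R] (k : ℕ) (t : ℕ → ℕ → Finset ℤ)
    (f : ℕ → ℕ → ℤ → R) :
    ∑ a ∈ boxPi k t, ∏ i ∈ range k, ∏ j ∈ range k, f i j (a i j) =
      ∏ i ∈ range k, ∏ j ∈ range k, ∑ v ∈ t i j, f i j v := by
  have key (g : ℕ → ℕ → R) : ∏ i ∈ range k, ∏ j ∈ range k, g i j =
      ∏ q : Fin k × Fin k, g q.1 q.2 := by
    rw [Fintype.prod_prod_type, Finset.prod_range]
    exact prod_congr rfl fun i _ => Finset.prod_range _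
  classical
  rw [key, Finset.prod_univ_sum, boxPi, Finset.sum_image]
  · refine sum_congr rfl fun a _ => ?_
    rw [key]
    simp
  · intro f _ g _ h
    funext ⟨i, j⟩
    simpa using congrFun (congrFun h i) j

/-- `a i j` is the corner sum of the first `i` rows and `j` columns of an ASM of size `n`. -/
structure IsCornerSum (n : ℕ) (a : ℕ → ℕ → ℤ) : Prop where
  left : ∀ i, i ≤ n → a i 0 = 0
  top : ∀ j, j ≤ n → a 0 j = 0
  right : ∀ i, i ≤ n → a i n = i
  bottom : ∀ j, j ≤ n → a n j = j
  row_le : ∀ i j, i ≤ n → j < n → a i j ≤ a i (j + 1)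
  row_ge : ∀ i j, i ≤ n → j < n → a i (j + 1) ≤ a i j + 1
  col_le : ∀ i j, i < n → j ≤ n → a i j ≤ a (i + 1) j
  col_ge : ∀ i j, i < n → j ≤ n → a (i + 1) j ≤ a i j + 1
  outside : ∀ i j, ¬(i < n + 1 ∧ j < n + 1) → a i j = 0

theorem IsCornerSum.nonneg {n : ℕ} {a : ℕ → ℕ → ℤ} (h : IsCornerSum n a) {i j : ℕ}
    (hi : i ≤ n) (hj : j ≤ n) : 0 ≤ a i j := by
  induction j with
  | zero => exact (h.left i hi).ge
  | succ j ih => exact (ih (by omega)).trans (h.row_le i j hi (by omega))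

theorem IsCornerSum.le_row {n : ℕ} {a : ℕ → ℕ → ℤ} (h : IsCornerSum n a) {i j : ℕ}
    (hi : i ≤ n) (hj : j ≤ n) : a i j ≤ i := by
  induction i with
  | zero => exact (h.top j hj).le
  | succ i ih =>
    have := ih (by omega)
    have := h.col_ge i j (by omega) hj
    push_cast
    omega

open Classical in
/-- The corner sum matrices of ASMs of size `n`. -/
noncomputable def cornerSums (n : ℕ) : Finset (ℕ → ℕ → ℤ) :=
  (boxPi (n + 1) (fun _ _ => Icc 0 (n : ℤ))).filter (IsCornerSum n)

theorem mem_cornerSums {n : ℕ} {a : ℕ → ℕ → ℤ} : a ∈ cornerSums n ↔ IsCornerSum n a := by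
  simp only [cornerSums, mem_filter, mem_boxPi, and_iff_right_iff_imp]
  intro h
  refine ⟨fun i j hi hj => ?_, h.outside⟩
  rw [mem_Icc]
  have := h.le_row (i := i) (j := j) (by omega) (by omega)
  exact ⟨h.nonneg (by omega) (by omega), by omega⟩

/-- The matrix entry determined by a `2 × 2` block of corner sums. -/
def cornerEntry (a : ℕ → ℕ → ℤ) (i j : ℕ) : ℤ :=
  a (i + 1) (j + 1) - a (i + 1) j - a i (j + 1) + a i j

section weights

variable {R : Type*} [CommRing R] (x z1 z2 : R)

/-- The boundary weight of the corner sum `v` in position `(i + 1, j + 1)`. -/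
def boundaryWeight (i j : ℕ) (v : ℤ) : R :=
  (if i = 0 then z1 ^ (1 - v).toNat else 1) * (if j = 0 then z2 ^ (1 - v).toNat else 1)

/-- The weight contributed by a `2 × 2` block of corner sums to the number of inversions. -/
def invWeight (a : ℕ → ℕ → ℤ) (i j : ℕ) : R :=
  if a i j = a (i + 1) j ∧ a (i + 1) j = a (i + 1) (j + 1) then x else 1

/-- The weight `y` for each entry of the matrix equal to `c`. -/
def entryWeight (c : ℤ) (y : R) (a : ℕ → ℕ → ℤ) (i j : ℕ) : R :=
  if cornerEntry a i j = c then y else 1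

/-- The generating function of corner sum matrices. -/
noncomputable def cornerGF (n : ℕ) : R :=
  ∑ a ∈ cornerSums n, ∏ i ∈ range n, ∏ j ∈ range n,
    invWeight x a i j * entryWeight (-1) (x + 1) a i j *
      boundaryWeight z1 z2 i j (a (i + 1) (j + 1))

/-- The corner sum matrices of size `n` compatible with the corner sum matrix `a` of size
`n + 1`. -/
noncomputable def below (n : ℕ) (a : ℕ → ℕ → ℤ) : Finset (ℕ → ℕ → ℤ) :=
  boxPi (n + 1) fun i j =>
    Icc (max (a i j) (a (i + 1) (j + 1) - 1)) (min (a (i + 1) j) (a i (j + 1)))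

/-- The range of the entries of corner sum matrices of size `n + 1` compatible with `b`. -/
noncomputable def aboveRange (n : ℕ) (b : ℕ → ℕ → ℤ) : ℕ → ℕ → Finset ℤ
  | 0, _ => {0}
  | _ + 1, 0 => {0}
  | i + 1, j + 1 =>
    if i = n then {(j + 1 : ℤ)} else if j = n then {(i + 1 : ℤ)} else
      Icc (max (b i (j + 1)) (b (i + 1) j)) (min (b (i + 1) (j + 1)) (b i j + 1))

theorem mem_below_iff {n : ℕ} {a b : ℕ → ℕ → ℤ} :
    (a ∈ cornerSums (n + 1) ∧ b ∈ below n a) ↔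
      (a ∈ boxPi (n + 2) (aboveRange n b) ∧ b ∈ cornerSums n) := by
  simp only [mem_cornerSums, below, mem_boxPi, mem_Icc, max_le_iff, le_min_iff]
  constructor
  · rintro ⟨ha, hb, hb0⟩
    have hbl : ∀ i, i ≤ n → b i 0 = 0 := fun i hi => by
      have := hb i 0 (by omega) (by omega)
      have := ha.left i (by omega)
      have := ha.left (i + 1) (by omega)
      omega
    have hbt : ∀ j, j ≤ n → b 0 j = 0 := fun j hj => by
      have := hb 0 j (by omega) (by omega)
      have := ha.top j (by omega)
      have := ha.top (j + 1) (by omega)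
      omega
    have hbr : ∀ i, i ≤ n → b i n = i := fun i hi => by
      have := hb i n (by omega) (by omega)
      have := ha.right i (by omega)
      have := ha.right (i + 1) (by omega)
      push_cast at *
      omega
    have hbb : ∀ j, j ≤ n → b n j = j := fun j hj => by
      have := hb n j (by omega) (by omega)
      have := ha.bottom j (by omega)
      have := ha.bottom (j + 1) (by omega)
      push_cast at *
      omega
    refine ⟨⟨?_, ha.outside⟩, hbl, hbt, hbr, hbb, ?_, ?_, ?_, ?_, hb0⟩
    · rintro (_ | i) (_ | j) hi hj
      · simpa [aboveRange] using ha.top 0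
      · simpa [aboveRange] using ha.top (j + 1) (by omega)
      · simpa [aboveRange] using ha.left (i + 1) (by omega)
      · simp only [aboveRange]
        split_ifs with h1 h2
        · subst h1
          simpa using ha.bottom (j + 1) (by omega)
        · subst h2
          simpa using ha.right (i + 1) (by omega)
        · have := hb i j (by omega) (by omega)
          have := hb i (j + 1) (by omega) (by omega)
          have := hb (i + 1) j (by omega) (by omega)
          have := hb (i + 1) (j + 1) (by omega) (by omega)
          simp only [mem_Icc, max_le_iff, le_min_iff]
          omega
    all_goals
      intro i j hi hj
      have h1 := hb i j (by omega) (by omega)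
    · have h2 := hb i (j + 1) (by omega) (by omega)
      omega
    · have h2 := hb i (j + 1) (by omega) (by omega)
      omega
    · have h2 := hb (i + 1) j (by omega) (by omega)
      omega
    · have h2 := hb (i + 1) j (by omega) (by omega)
      omega
  · rintro ⟨⟨ha, ha0⟩, hb⟩
    have hal : ∀ i, i ≤ n + 1 → a i 0 = 0 := fun i hi => by
      have := ha i 0 (by omega) (by omega)
      cases i <;> simpa [aboveRange] using this
    have hat : ∀ j, j ≤ n + 1 → a 0 j = 0 := fun j hj => by
      have := ha 0 j (by omega) (by omega)
      simpa [aboveRange] using this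
    have hab : ∀ j, j ≤ n + 1 → a (n + 1) j = j := fun j hj => by
      have := ha (n + 1) j (by omega) (by omega)
      cases j <;> simpa [aboveRange] using this
    have har : ∀ i, i ≤ n + 1 → a i (n + 1) = i := fun i hi => by
      have := ha i (n + 1) (by omega) (by omega)
      cases i with
      | zero => simpa [aboveRange] using this
      | succ i =>
        by_cases h : i = n
        · subst h
          simpa [aboveRange] using this
        · simpa [aboveRange, h] using this
    have hinner : ∀ i j, i < n → j < n →
        (b i (j + 1) ≤ a (i + 1) (j + 1) ∧ b (i + 1) j ≤ a (i + 1) (j + 1)) ∧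
        (a (i + 1) (j + 1) ≤ b (i + 1) (j + 1) ∧ a (i + 1) (j + 1) ≤ b i j + 1) := by
      intro i j hi hj
      have := ha (i + 1) (j + 1) (by omega) (by omega)
      simpa [aboveRange, hi.ne, hj.ne] using this
    have h1 : ∀ i j, i ≤ n → j ≤ n → a i j ≤ b i j := by
      rintro (_ | i) (_ | j) hi hj
      · rw [hat _ (by omega), hb.top _ (by omega)]
      · rw [hat _ (by omega), hb.top _ (by omega)]
      · rw [hal _ (by omega), hb.left _ (by omega)]
      · exact (hinner i j (by omega) (by omega)).2.1
    have h2 : ∀ i j, i ≤ n → j ≤ n → a (i + 1) (j + 1) - 1 ≤ b i j := by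
      intro i j hi hj
      rcases hi.eq_or_lt with rfl | hi'
      · have := hab (j + 1) (by omega)
        have := hb.bottom j (by omega)
        push_cast at *
        omega
      rcases hj.eq_or_lt with rfl | hj'
      · have := har (i + 1) (by omega)
        have := hb.right i (by omega)
        push_cast at *
        omega
      have := hinner i j hi' hj'
      omega
    have h3 : ∀ i j, i ≤ n → j ≤ n → b i j ≤ a (i + 1) j := by
      intro i j hi hj
      rcases hi.eq_or_lt with rfl | hi'
      · rw [hab j (by omega), hb.bottom j hj]
      rcases j with _ | j
      · rw [hal _ (by omega), hb.left _ hi]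
      exact (hinner i j hi' (by omega)).1.1
    have h4 : ∀ i j, i ≤ n → j ≤ n → b i j ≤ a i (j + 1) := by
      intro i j hi hj
      rcases hj.eq_or_lt with rfl | hj'
      · rw [har i (by omega), hb.right i hi]
      rcases i with _ | i
      · rw [hat _ (by omega), hb.top _ hj]
      exact (hinner i j (by omega) hj').1.2
    refine ⟨⟨hal, hat, har, hab, ?_, ?_, ?_, ?_, ha0⟩,
      fun i j hi hj => ⟨⟨h1 i j (by omega) (by omega), h2 i j (by omega) (by omega)⟩,
        h3 i j (by omega) (by omega), h4 i j (by omega) (by omega)⟩, hb.outside⟩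
    · intro i j hi hj
      rcases hi.eq_or_lt with rfl | hi'
      · rw [hab _ (by omega), hab _ (by omega)]
        push_cast
        omega
      · have := h1 i j (by omega) (by omega)
        have := h4 i j (by omega) (by omega)
        omega
    · intro i j hi hj
      rcases i with _ | i
      · rw [hat _ (by omega), hat _ (by omega)]
        omega
      · have := h2 i j (by omega) (by omega)
        have := h3 i j (by omega) (by omega)
        omega
    · intro i j hi hj
      rcases hj.eq_or_lt with rfl | hj'
      · rw [har _ (by omega), har _ (by omega)]
        push_cast
        omega
      · have := h1 i j (by omega) (by omega)
        have := h3 i j (by omega) (by omega)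
        omega
    · intro i j hi hj
      rcases j with _ | j
      · rw [hal _ (by omega), hal _ (by omega)]
        omega
      · have := h2 i j (by omega) (by omega)
        have := h4 i j (by omega) (by omega)
        omega

theorem IsCornerSum.block {n : ℕ} {a : ℕ → ℕ → ℤ} (ha : IsCornerSum n a) {i j : ℕ}
    (hi : i < n) (hj : j < n) :
    ((a i (j + 1) = a i j ∨ a i (j + 1) = a i j + 1) ∧
      (a (i + 1) j = a i j ∨ a (i + 1) j = a i j + 1)) ∧
    ((a (i + 1) (j + 1) = a i (j + 1) ∨ a (i + 1) (j + 1) = a i (j + 1) + 1) ∧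
      (a (i + 1) (j + 1) = a (i + 1) j ∨ a (i + 1) (j + 1) = a (i + 1) j + 1)) := by
  have h1 := ha.row_le i j (by omega) hj
  have h2 := ha.row_ge i j (by omega) hj
  have h3 := ha.col_le i j hi (by omega)
  have h4 := ha.col_ge i j hi (by omega)
  have h5 := ha.row_le (i + 1) j (by omega) hj
  have h6 := ha.row_ge (i + 1) j (by omega) hj
  have h7 := ha.col_le i (j + 1) hi (by omega)
  have h8 := ha.col_ge i (j + 1) hi (by omega)
  omega

theorem sum_Icc_below {p q r s : ℤ} (h : ((q = p ∨ q = p + 1) ∧ (r = p ∨ r = p + 1)) ∧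
    ((s = q ∨ s = q + 1) ∧ (s = r ∨ s = r + 1))) :
    ∑ v ∈ Icc (max p (s - 1)) (min r q), x ^ (1 + v - s).toNat =
      (if p = r ∧ r = s then x else 1) * (if s - r - q + p = -1 then x + 1 else 1) := by
  obtain ⟨⟨hq, hr⟩, hs, hs'⟩ := h
  have hI : Icc p (p + 1) = {p, p + 1} := by
    ext v
    simp only [mem_Icc, mem_insert, mem_singleton]
    omega
  by_cases h1 : s - r - q + p = -1
  · obtain rfl : q = p + 1 := by omega
    obtain rfl : r = p + 1 := by omega
    obtain rfl : s = p + 1 := by omega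
    have e1 : max p (p + 1 - 1) = p := by omega
    rw [e1, min_self, hI, sum_pair (by omega), if_neg (by omega), if_pos h1]
    have e2 : (1 + p - (p + 1)).toNat = 0 := by omega
    have e3 : (1 + (p + 1) - (p + 1)).toNat = 1 := by omega
    rw [e2, e3]
    ring
  · have e1 : max p (s - 1) = min r q := by omega
    rw [e1, Icc_self, sum_singleton, if_neg h1, mul_one]
    split_ifs with h2
    · have e2 : (1 + min r q - s).toNat = 1 := by omega
      rw [e2, pow_one]
    · have e2 : (1 + min r q - s).toNat = 0 := by omega
      rw [e2, pow_zero]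

theorem sum_Icc_above {p q r s : ℤ} (h : ((q = p ∨ q = p + 1) ∧ (r = p ∨ r = p + 1)) ∧
    ((s = q ∨ s = q + 1) ∧ (s = r ∨ s = r + 1))) (Z : ℤ → R) :
    ∑ v ∈ Icc (max q r) (min s (p + 1)), x ^ (1 + p - v).toNat * Z v =
      if s - r - q + p = 1 then x * Z p + Z s else
      (if p = r ∧ r = s then x else 1) * Z (min s (p + 1)) := by
  obtain ⟨⟨hq, hr⟩, hs, hs'⟩ := h
  have hI : Icc p (p + 1) = {p, p + 1} := by
    ext v
    simp only [mem_Icc, mem_insert, mem_singleton]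
    omega
  by_cases h1 : s - r - q + p = 1
  · obtain rfl : q = p := by omega
    obtain rfl : r = q := by omega
    obtain rfl : s = r + 1 := by omega
    rw [max_self, min_self, hI, sum_pair (by omega), if_pos h1]
    have e2 : (1 + r - r).toNat = 1 := by omega
    have e3 : (1 + r - (r + 1)).toNat = 0 := by omega
    rw [e2, e3]
    ring
  · have e1 : max q r = min s (p + 1) := by omega
    rw [e1, Icc_self, sum_singleton, if_neg h1]
    congr 1
    split_ifs with h2
    · have e2 : (1 + p - min s (p + 1)).toNat = 1 := by omega
      rw [e2, pow_one]
    · have e2 : (1 + p - min s (p + 1)).toNat = 0 := by omega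
      rw [e2, pow_zero]

/-- Summing over the corner sums of size `n` compatible with `a` gives the weight of `a`. -/
theorem sum_below {n : ℕ} {a : ℕ → ℕ → ℤ} (ha : IsCornerSum (n + 1) a) :
    ∑ b ∈ below n a, ∏ i ∈ range (n + 1), ∏ j ∈ range (n + 1),
        x ^ (1 + b i j - a (i + 1) (j + 1)).toNat *
          boundaryWeight z1 z2 i j (a (i + 1) (j + 1)) =
      ∏ i ∈ range (n + 1), ∏ j ∈ range (n + 1),
        invWeight x a i j * entryWeight (-1) (x + 1) a i j *
          boundaryWeight z1 z2 i j (a (i + 1) (j + 1)) := by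
  rw [below, sum_boxPi (n + 1) _ (fun i j v => x ^ (1 + v - a (i + 1) (j + 1)).toNat *
          boundaryWeight z1 z2 i j (a (i + 1) (j + 1)))]
  refine prod_congr rfl fun i hi => prod_congr rfl fun j hj => ?_
  rw [mem_range] at hi hj
  rw [← sum_mul]
  congr 1
  exact sum_Icc_below x (ha.block hi hj)

/-- Summing over the corner sums of size `n + 1` compatible with `b`. -/
theorem sum_above {n : ℕ} {b : ℕ → ℕ → ℤ} (hb : IsCornerSum n b) :
    ∑ a ∈ boxPi (n + 2) (aboveRange n b), ∏ i ∈ range (n + 1), ∏ j ∈ range (n + 1),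
        x ^ (1 + b i j - a (i + 1) (j + 1)).toNat *
          boundaryWeight z1 z2 i j (a (i + 1) (j + 1)) =
      ∏ i ∈ range n, ∏ j ∈ range n,
        invWeight x b i j * boundaryWeight z1 z2 i j (b (i + 1) (j + 1)) *
          entryWeight 1 (1 + x * ((if i = 0 then z1 else 1) * (if j = 0 then z2 else 1))) b i j := by
  have key := sum_boxPi (n + 2) (aboveRange n b) (fun i j v =>
    if i = 0 ∨ j = 0 then 1 else
      x ^ (1 + b (i - 1) (j - 1) - v).toNat * boundaryWeight z1 z2 (i - 1) (j - 1) v)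
  simp only [prod_range_succ' _ (n + 1), Nat.add_eq_zero_iff, one_ne_zero, and_false, or_self,
    if_false, true_or, or_true, if_true, prod_const_one, mul_one, Nat.add_sub_cancel] at key
  rw [key]
  have hr : ∀ i, i ≤ n → ∑ v ∈ aboveRange n b (i + 1) (n + 1),
      x ^ (1 + b i n - v).toNat * boundaryWeight z1 z2 i n v = 1 := by
    intro i hi
    have : aboveRange n b (i + 1) (n + 1) = {(i + 1 : ℤ)} := by
      simp only [aboveRange]
      split_ifs with h
      · rw [h]
      · rfl
    rw [this, sum_singleton, hb.right i hi]
    have e1 : (1 + (i : ℤ) - (i + 1)).toNat = 0 := by omega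
    simp [boundaryWeight, e1]
  have hl : ∀ j, j ≤ n → ∑ v ∈ aboveRange n b (n + 1) (j + 1),
      x ^ (1 + b n j - v).toNat * boundaryWeight z1 z2 n j v = 1 := by
    intro j hj
    rw [aboveRange, if_pos rfl, sum_singleton, hb.bottom j hj]
    have e1 : (1 + (j : ℤ) - (j + 1)).toNat = 0 := by omega
    simp [boundaryWeight, e1]
  have hz : ∀ j, ∑ v ∈ aboveRange n b 0 j, (1 : R) = 1 := fun j => by simp [aboveRange]
  have hz' : ∀ i, ∑ v ∈ aboveRange n b (i + 1) 0, (1 : R) = 1 := fun j => by simp [aboveRange]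
  simp only [hz, hz', prod_const_one, mul_one]
  rw [prod_range_succ, prod_congr rfl fun j hj => hl j (by simpa [Nat.lt_succ_iff] using hj)]
  rw [prod_const_one, mul_one]
  refine prod_congr rfl fun i hi => ?_
  rw [mem_range] at hi
  rw [prod_range_succ, hr i hi.le, mul_one]
  refine prod_congr rfl fun j hj => ?_
  rw [mem_range] at hj
  have hblk := hb.block hi hj
  rw [aboveRange, if_neg hi.ne, if_neg hj.ne, sum_Icc_above x hblk]
  simp only [invWeight]
  have ht : i = 0 → b i j = 0 ∧ b i (j + 1) = 0 := by
    rintro rfl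
    exact ⟨hb.top _ (by omega), hb.top _ (by omega)⟩
  have ht' : j = 0 → b i j = 0 ∧ b (i + 1) j = 0 := by
    rintro rfl
    exact ⟨hb.left _ (by omega), hb.left _ (by omega)⟩
  by_cases h1 : b (i + 1) (j + 1) - b (i + 1) j - b i (j + 1) + b i j = 1
  · rw [if_pos h1, entryWeight, if_pos (show cornerEntry b i j = 1 from h1), if_neg (by omega),
      one_mul]
    by_cases hij : i = 0 ∨ j = 0
    · have hp : b i j = 0 := hij.elim (fun h => (ht h).1) (fun h => (ht' h).1)
      have hs : b (i + 1) (j + 1) = 1 := by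
        rcases hij with h | h
        · have := ht h
          omega
        · have := ht' h
          omega
      rw [hp, hs]
      simp [boundaryWeight, add_comm]
    · rw [not_or] at hij
      simp [boundaryWeight, hij.1, hij.2, add_comm]
  · rw [if_neg h1, entryWeight, if_neg (show ¬cornerEntry b i j = 1 from h1), mul_one]
    congr 1
    by_cases hij : i = 0 ∨ j = 0
    · congr 1
      rcases hij with h | h
      · have := ht h
        omega
      · have := ht' h
        omega
    · rw [not_or] at hij
      simp [boundaryWeight, hij.1, hij.2]

theorem prod_entryWeight (y : R) (c : ℤ) (a : ℕ → ℕ → ℤ) (s t : Finset ℕ) :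
    ∏ i ∈ s, ∏ j ∈ t, entryWeight c y a i j =
      y ^ ∑ i ∈ s, ∑ j ∈ t, if cornerEntry a i j = c then 1 else 0 := by
  simp only [← prod_pow_eq_pow_sum, entryWeight]
  refine prod_congr rfl fun i _ => prod_congr rfl fun j _ => ?_
  split_ifs <;> simp

theorem IsCornerSum.cornerEntry_cases {n : ℕ} {a : ℕ → ℕ → ℤ} (ha : IsCornerSum n a) {i j : ℕ}
    (hi : i < n) (hj : j < n) :
    cornerEntry a i j = -1 ∨ cornerEntry a i j = 0 ∨ cornerEntry a i j = 1 := by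
  have := ha.block hi hj
  simp only [cornerEntry]
  omega

theorem sum_range_cornerEntry (a : ℕ → ℕ → ℤ) (i k : ℕ) :
    ∑ j ∈ range k, cornerEntry a i j = (a (i + 1) k - a i k) - (a (i + 1) 0 - a i 0) := by
  rw [← sum_range_sub (fun j => a (i + 1) j - a i j)]
  refine sum_congr rfl fun j _ => ?_
  simp only [cornerEntry]
  ring

theorem prod_step (y : R) (f : ℕ → ℤ) (k : ℕ)
    (hf : ∀ j < k, f (j + 1) = f j ∨ f (j + 1) = f j + 1) :
    ∏ j ∈ range k, (if f (j + 1) - f j = 1 then y else 1) = y ^ (f k - f 0).toNat ∧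
      f 0 ≤ f k := by
  induction k with
  | zero => simp
  | succ k ih =>
    obtain ⟨ih, hk⟩ := ih fun j hj => hf j (by omega)
    rw [prod_range_succ, ih]
    rcases hf k (by omega) with h | h
    · rw [if_neg (by omega), h]
      exact ⟨mul_one _, hk⟩
    · rw [if_pos (by omega), ← pow_succ]
      refine ⟨?_, by omega⟩
      congr 1
      omega

/-- The entries equal to `1` outside of the first row and column are as numerous as the entries
equal to `-1`, up to a difference fixed by the top left entry. -/
theorem card_entries {m : ℕ} {b : ℕ → ℕ → ℤ} (hb : IsCornerSum (m + 1) b) :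
    ((∑ i ∈ range m, ∑ j ∈ range m,
        if cornerEntry b (i + 1) (j + 1) = 1 then 1 else 0 : ℕ) : ℤ) =
      ((∑ i ∈ range (m + 1), ∑ j ∈ range (m + 1),
        if cornerEntry b i j = -1 then 1 else 0 : ℕ) : ℤ) + (m - 1 + b 1 1) := by
  have hneg : (∑ i ∈ range (m + 1), ∑ j ∈ range (m + 1),
      if cornerEntry b i j = -1 then 1 else 0 : ℕ) = ∑ i ∈ range m, ∑ j ∈ range m,
        if cornerEntry b (i + 1) (j + 1) = -1 then 1 else 0 := by
    have h0 : ∀ j < m + 1, cornerEntry b 0 j ≠ -1 := fun j hj => by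
      have := hb.block (i := 0) (j := j) (by omega) hj
      have := hb.top j (by omega)
      have := hb.top (j + 1) (by omega)
      simp only [cornerEntry]
      omega
    have h0' : ∀ i < m + 1, cornerEntry b i 0 ≠ -1 := fun i hi => by
      have := hb.block (i := i) (j := 0) hi (by omega)
      have := hb.left i (by omega)
      have := hb.left (i + 1) (by omega)
      simp only [cornerEntry]
      omega
    rw [sum_range_succ', sum_eq_zero (s := range (m + 1)) (fun j hj => if_neg
      (h0 j (mem_range.1 hj))), add_zero]
    refine sum_congr rfl fun i hi => ?_
    rw [sum_range_succ', if_neg (h0' _ (by simpa using hi)), add_zero]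
  have htot : ∑ i ∈ range m, ∑ j ∈ range m, cornerEntry b (i + 1) (j + 1) = m - 1 + b 1 1 := by
    have h1 (i : ℕ) : ∑ j ∈ range m, cornerEntry b (i + 1) (j + 1) =
        (b (i + 1 + 1) (m + 1) - b (i + 1 + 1) 1) - (b (i + 1) (m + 1) - b (i + 1) 1) := by
      have := sum_range_cornerEntry (fun i j => b i (j + 1)) (i + 1) m
      simp only [cornerEntry] at this ⊢
      rw [this]
      ring
    simp only [h1]
    rw [sum_range_sub (fun i => b (i + 1) (m + 1) - b (i + 1) 1)]
    have h2 := hb.bottom (m + 1) le_rfl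
    have h3 := hb.bottom 1 (by omega)
    have h4 := hb.right 1 (by omega)
    rw [h2]
    simp only [zero_add] at *
    rw [h3, h4]
    push_cast
    ring
  rw [hneg, ← htot]
  push_cast
  simp only [← sum_add_distrib]
  refine sum_congr rfl fun i hi => sum_congr rfl fun j hj => ?_
  rw [mem_range] at hi hj
  rcases hb.cornerEntry_cases (i := i + 1) (j := j + 1) (by omega) (by omega) with h | h | h <;>
    simp [h]

theorem prod_one_entries {m : ℕ} {b : ℕ → ℕ → ℤ} (hb : IsCornerSum (m + 1) b) :
    ∏ i ∈ range (m + 1), ∏ j ∈ range (m + 1),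
        entryWeight 1 (1 + x * ((if i = 0 then z1 else 1) * (if j = 0 then z2 else 1))) b i j =
      (if b 1 1 = 1 then (1 + x) ^ m * (1 + x * (z1 * z2)) else
        (1 + x) ^ (m - 1) * ((1 + x * z1) * (1 + x * z2))) *
      ∏ i ∈ range (m + 1), ∏ j ∈ range (m + 1), entryWeight (-1) (x + 1) b i j := by
  have hrow : ∏ j ∈ range m, entryWeight 1 (1 + x * z1) b 0 (j + 1) =
      (1 + x * z1) ^ (1 - b 1 1).toNat := by
    have := (prod_step (1 + x * z1) (fun j => b 1 (j + 1)) m fun j hj => by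
      simpa using (hb.block (i := 0) (j := j + 1) (by omega) (by omega)).2.2).1
    rw [hb.right 1 (by omega)] at this
    simp only [zero_add, Nat.cast_one] at this
    rw [← this]
    refine prod_congr rfl fun j hj => ?_
    rw [mem_range] at hj
    simp only [entryWeight, cornerEntry, hb.top (j + 1) (by omega), hb.top (j + 1 + 1) (by omega)]
    simp
  have hcol : ∏ i ∈ range m, entryWeight 1 (1 + x * z2) b (i + 1) 0 =
      (1 + x * z2) ^ (1 - b 1 1).toNat := by
    have := (prod_step (1 + x * z2) (fun i => b (i + 1) 1) m fun i hi => by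
      simpa using (hb.block (i := i + 1) (j := 0) (by omega) (by omega)).2.1).1
    rw [hb.bottom 1 (by omega)] at this
    simp only [zero_add, Nat.cast_one] at this
    rw [← this]
    refine prod_congr rfl fun i hi => ?_
    rw [mem_range] at hi
    simp only [entryWeight, cornerEntry, hb.left (i + 1) (by omega),
      hb.left (i + 1 + 1) (by omega)]
    simp
  have hb11 : b 1 1 = 0 ∨ b 1 1 = 1 := by
    have := hb.block (i := 0) (j := 0) (by omega) (by omega)
    have := hb.top 0 (by omega)
    have := hb.top 1 (by omega)
    have := hb.left 1 (by omega)
    simp only [zero_add] at *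
    omega
  have hcorner : entryWeight 1 (1 + x * (z1 * z2)) b 0 0 =
      if b 1 1 = 1 then 1 + x * (z1 * z2) else 1 := by
    simp only [entryWeight, cornerEntry, zero_add, hb.top 0 (by omega), hb.top 1 (by omega),
      hb.left 1 (by omega)]
    simp
  have hinner : ∏ i ∈ range m, ∏ j ∈ range m, entryWeight 1 (1 + x) b (i + 1) (j + 1) =
      (1 + x) ^ (if b 1 1 = 1 then m else m - 1) *
        ∏ i ∈ range (m + 1), ∏ j ∈ range (m + 1), entryWeight (-1) (x + 1) b i j := by
    have h1 := prod_entryWeight (1 + x) 1 (fun i j => b (i + 1) (j + 1)) (range m) (range m)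
    have h2 : ∀ i j, entryWeight 1 (1 + x) (fun i j => b (i + 1) (j + 1)) i j =
      entryWeight 1 (1 + x) b (i + 1) (j + 1) := fun i j => rfl
    have h3 : ∀ i j, cornerEntry (fun i j => b (i + 1) (j + 1)) i j =
      cornerEntry b (i + 1) (j + 1) := fun i j => rfl
    simp only [h2, h3] at h1
    rw [h1, prod_entryWeight, add_comm x 1, ← pow_add]
    congr 1
    have := card_entries hb
    rcases hb11 with h | h
    · rw [if_neg (by omega)]
      rcases Nat.eq_zero_or_pos m with rfl | hm
      · have := hb.right 1 (by omega)
        simp only [zero_add] at this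
        push_cast at this
        omega
      · omega
    · rw [if_pos h]
      omega
  rw [prod_range_succ', prod_range_succ']
  simp only [prod_range_succ' _ m, prod_mul_distrib, if_true, Nat.add_eq_zero_iff, one_ne_zero,
    and_false, if_false, mul_one, one_mul] at *
  rw [hrow, hcol, hcorner, hinner]
  rcases hb11 with h | h
  · simp [h]
    ring
  · simp [h]
    ring

theorem prod_boundaryWeight_of_one {m : ℕ} {b : ℕ → ℕ → ℤ} (hb : IsCornerSum (m + 1) b)
    (h : b 1 1 = 1) :
    ∏ i ∈ range (m + 1), ∏ j ∈ range (m + 1), boundaryWeight z1 z2 i j (b (i + 1) (j + 1)) = 1 := by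
  have h1 : ∀ j < m + 1, 1 ≤ b 1 (j + 1) := by
    intro j hj
    induction j with
    | zero => exact h.ge
    | succ j ih => exact (ih (by omega)).trans (hb.row_le 1 (j + 1) (by omega) (by omega))
  have h2 : ∀ i < m + 1, 1 ≤ b (i + 1) 1 := by
    intro i hi
    induction i with
    | zero => exact h.ge
    | succ i ih => exact (ih (by omega)).trans (hb.col_le (i + 1) 1 (by omega) (by omega))
  refine prod_eq_one fun i hi => prod_eq_one fun j hj => ?_
  rw [mem_range] at hi hj
  rw [boundaryWeight]
  have e1 : (if i = 0 then z1 ^ (1 - b (i + 1) (j + 1)).toNat else 1) = 1 := by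
    split_ifs with h0
    · subst h0
      have : (1 - b (0 + 1) (j + 1)).toNat = 0 := by
        have := h1 j hj
        simp only [zero_add]
        omega
      rw [this, pow_zero]
    · rfl
  have e2 : (if j = 0 then z2 ^ (1 - b (i + 1) (j + 1)).toNat else 1) = 1 := by
    split_ifs with h0
    · subst h0
      have : (1 - b (i + 1) (0 + 1)).toNat = 0 := by
        have := h2 i hi
        simp only [zero_add]
        omega
      rw [this, pow_zero]
    · rfl
  rw [e1, e2, one_mul]

theorem prod_boundaryWeight_zero {m : ℕ} {b : ℕ → ℕ → ℤ} (hb : IsCornerSum (m + 1) b) :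
    ∏ i ∈ range (m + 1), ∏ j ∈ range (m + 1),
      boundaryWeight (0 : R) 0 i j (b (i + 1) (j + 1)) = if b 1 1 = 1 then 1 else 0 := by
  split_ifs with h
  · exact prod_boundaryWeight_of_one 0 0 hb h
  · have h1 := hb.row_ge 1 0 (by omega) (by omega)
    have h2 := hb.left 1 (by omega)
    rw [zero_add] at h1
    refine prod_eq_zero (i := 0) (by simp) (prod_eq_zero (i := 0) (by simp) ?_)
    have : (1 - b (0 + 1) (0 + 1)).toNat ≠ 0 := by
      rw [zero_add]
      omega
    rw [boundaryWeight, if_pos rfl, zero_pow this, zero_mul]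

theorem cornerGF_succ (m : ℕ) :
    cornerGF x z1 z2 (m + 2) =
      (1 + x) ^ m * (1 + x * (z1 * z2)) * cornerGF x 0 0 (m + 1) +
      (1 + x) ^ (m - 1) * ((1 + x * z1) * (1 + x * z2)) *
        (cornerGF x z1 z2 (m + 1) - cornerGF x 0 0 (m + 1)) := by
  have h1 : cornerGF x z1 z2 (m + 2) = ∑ b ∈ cornerSums (m + 1),
      ∏ i ∈ range (m + 1), ∏ j ∈ range (m + 1),
        invWeight x b i j * boundaryWeight z1 z2 i j (b (i + 1) (j + 1)) *
          entryWeight 1 (1 + x * ((if i = 0 then z1 else 1) * (if j = 0 then z2 else 1))) b i j := by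
    rw [cornerGF, ← sum_congr rfl fun a ha => sum_below x z1 z2 (mem_cornerSums.1 ha),
      sum_comm' (t' := cornerSums (m + 1)) (s' := fun b => boxPi (m + 3) (aboveRange (m + 1) b))
        (fun a b => mem_below_iff)]
    exact sum_congr rfl fun b hb => sum_above x z1 z2 (mem_cornerSums.1 hb)
  rw [h1, cornerGF, cornerGF, ← sum_sub_distrib, mul_sum, mul_sum, ← sum_add_distrib]
  refine sum_congr rfl fun b hb => ?_
  rw [mem_cornerSums] at hb
  have h2 := prod_one_entries x z1 z2 hb
  have h3 := prod_boundaryWeight_zero (R := R) hb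
  simp only [prod_mul_distrib] at *
  rw [h2, h3]
  split_ifs with h
  · have h4 := prod_boundaryWeight_of_one z1 z2 hb h
    rw [h4]
    ring
  · ring

theorem cornerGF_one : cornerGF x z1 z2 1 = 1 := by
  have : cornerSums 1 = {fun i j => if i = 1 ∧ j = 1 then 1 else 0} := by
    ext a
    rw [mem_cornerSums, mem_singleton]
    constructor
    · intro h
      funext i j
      by_cases hij : i < 2 ∧ j < 2
      · obtain ⟨hi, hj⟩ := hij
        interval_cases i <;> interval_cases j
        · simpa using h.left 0
        · simpa using h.top 1
        · simpa using h.left 1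
        · simpa using h.right 1
      · rw [h.outside i j hij, if_neg (by omega)]
    · rintro rfl
      constructor <;> intros <;> grind
  rw [cornerGF, this, sum_singleton]
  simp [invWeight, entryWeight, cornerEntry, boundaryWeight]

theorem cornerGF_zero (m : ℕ) : cornerGF x 0 0 (m + 1) = (1 + x) ^ m.choose 2 := by
  induction m with
  | zero => simpa using cornerGF_one x 0 0
  | succ m ih =>
    rw [cornerGF_succ, ih, Nat.choose_succ_succ' m 1, Nat.choose_one_right, pow_add]
    ring

theorem mul_cornerGF (m : ℕ) :
    (x * z1 * z2 + z1 + z2 - 1) * cornerGF x z1 z2 (m + 2) =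
      z1 * z2 * ((x * z1 + 1) * (x * z2 + 1)) ^ (m + 1) * (x + 1) ^ m.choose 2 -
        (z1 - 1) * (z2 - 1) * (x + 1) ^ (m + 1).choose 2 := by
  induction m with
  | zero =>
    rw [cornerGF_succ, zero_add, cornerGF_one, cornerGF_one]
    simp
    ring
  | succ m ih =>
    rw [cornerGF_succ, cornerGF_zero, Nat.add_sub_cancel, add_comm 1 x]
    have e1 : (m + 1).choose 2 = m + m.choose 2 := by
      rw [Nat.choose_succ_succ' m 1, Nat.choose_one_right]
    have e2 : (m + 1 + 1).choose 2 = m + 1 + (m + 1).choose 2 := by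
      rw [Nat.choose_succ_succ' (m + 1) 1, Nat.choose_one_right]
    rw [e2]
    rw [e1] at ih ⊢
    simp only [pow_add, pow_one] at ih ⊢
    linear_combination (x + 1) ^ m * ((1 + x * z1) * (1 + x * z2)) * ih

end weights

/-- The extension of a matrix by zero to all natural indices. -/
def entryExt {n : ℕ} (A : Fin n → Fin n → ℤ) (i j : ℕ) : ℤ :=
  if h : i < n ∧ j < n then A ⟨i, h.1⟩ ⟨j, h.2⟩ else 0

/-- The corner sums of a matrix. -/
def cornerSum {n : ℕ} (A : Fin n → Fin n → ℤ) (i j : ℕ) : ℤ :=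
  if i < n + 1 ∧ j < n + 1 then ∑ i' ∈ range i, ∑ j' ∈ range j, entryExt A i' j' else 0

theorem entryExt_fin {n : ℕ} (A : Fin n → Fin n → ℤ) (i j : Fin n) : entryExt A i j = A i j := by
  simp [entryExt]

theorem sum_filter_fin_le {n : ℕ} (g : ℕ → ℤ) (j : Fin n) :
    ∑ j' ∈ univ.filter (fun j' : Fin n => j' ≤ j), g j' = ∑ k ∈ range (j + 1), g k := by
  refine sum_bij (fun (k : Fin n) _ => (k : ℕ)) ?_ ?_ ?_ ?_
  · intro k hk
    simpa [Nat.lt_succ_iff] using hk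
  · intro k _ l _ h
    exact Fin.ext h
  · intro k hk
    have := j.2
    rw [mem_range] at hk
    refine ⟨⟨k, by omega⟩, ?_, rfl⟩
    rw [mem_filter, Fin.le_def]
    exact ⟨mem_univ _, Nat.lt_succ_iff.1 hk⟩
  · intro k _
    rfl

theorem isASM_iff {n : ℕ} {A : Fin n → Fin n → ℤ} :
    IsASM A ↔ (∀ i < n, ∀ j < n, entryExt A i j = -1 ∨ entryExt A i j = 0 ∨ entryExt A i j = 1) ∧
      (∀ i < n, ∀ j < n, ∑ k ∈ range (j + 1), entryExt A i k = 0 ∨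
        ∑ k ∈ range (j + 1), entryExt A i k = 1) ∧
      (∀ i < n, ∀ j < n, ∑ k ∈ range (i + 1), entryExt A k j = 0 ∨
        ∑ k ∈ range (i + 1), entryExt A k j = 1) ∧
      (∀ i < n, ∑ k ∈ range n, entryExt A i k = 1) ∧
      (∀ j < n, ∑ k ∈ range n, entryExt A k j = 1) := by
  have hr (i : ℕ) := sum_filter_fin_le (n := n) (fun k => entryExt A i k)
  have hc (j : ℕ) := sum_filter_fin_le (n := n) (fun k => entryExt A k j)
  have hr' (i : ℕ) := Fin.sum_univ_eq_sum_range (fun k => entryExt A i k) n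
  have hc' (j : ℕ) := Fin.sum_univ_eq_sum_range (fun k => entryExt A k j) n
  simp only [IsASM, ← entryExt_fin A, hr, hc, hr', hc', Fin.forall_iff]

theorem cornerSum_row {n : ℕ} (A : Fin n → Fin n → ℤ) {i j : ℕ} (hi : i ≤ n) (hj : j < n) :
    cornerSum A i (j + 1) = cornerSum A i j + ∑ k ∈ range i, entryExt A k j := by
  rw [cornerSum, cornerSum, if_pos (by omega), if_pos (by omega), ← sum_add_distrib]
  exact sum_congr rfl fun k _ => sum_range_succ _ _

theorem cornerSum_col {n : ℕ} (A : Fin n → Fin n → ℤ) {i j : ℕ} (hi : i < n) (hj : j ≤ n) :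
    cornerSum A (i + 1) j = cornerSum A i j + ∑ k ∈ range j, entryExt A i k := by
  rw [cornerSum, cornerSum, if_pos (by omega), if_pos (by omega), sum_range_succ]

theorem IsASM.isCornerSum {n : ℕ} {A : Fin n → Fin n → ℤ} (hA : IsASM A) :
    IsCornerSum n (cornerSum A) := by
  obtain ⟨-, h1, h2, h3, h4⟩ := isASM_iff.1 hA
  have hrow : ∀ i j, i ≤ n → j < n → 0 ≤ ∑ k ∈ range i, entryExt A k j ∧
      ∑ k ∈ range i, entryExt A k j ≤ 1 := by
    rintro (_ | i) j hi hj
    · simp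
    · have := h2 i (by omega) j hj
      omega
  have hcol : ∀ i j, i < n → j ≤ n → 0 ≤ ∑ k ∈ range j, entryExt A i k ∧
      ∑ k ∈ range j, entryExt A i k ≤ 1 := by
    rintro i (_ | j) hi hj
    · simp
    · have := h1 i hi j (by omega)
      omega
  refine ⟨?_, ?_, ?_, ?_, ?_, ?_, ?_, ?_, fun i j h => if_neg h⟩
  · intro i hi
    simp [cornerSum]
  · intro i hi
    simp [cornerSum]
  · intro i hi
    rw [cornerSum, if_pos (by omega), sum_congr rfl fun k hk => h3 k (by simp at hk; omega)]
    simp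
  · intro j hj
    rw [cornerSum, if_pos (by omega), sum_comm,
      sum_congr rfl fun k hk => h4 k (by simp at hk; omega)]
    simp
  all_goals intro i j hi hj
  · have := hrow i j hi hj
    rw [cornerSum_row A hi hj]
    omega
  · have := hrow i j hi hj
    rw [cornerSum_row A hi hj]
    omega
  · have := hcol i j hi hj
    rw [cornerSum_col A hi hj]
    omega
  · have := hcol i j hi hj
    rw [cornerSum_col A hi hj]
    omega

theorem cornerEntry_cornerSum {n : ℕ} (A : Fin n → Fin n → ℤ) (i j : Fin n) :
    cornerEntry (cornerSum A) i j = A i j := by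
  rw [cornerEntry, cornerSum_row A (by omega) j.2, cornerSum_row A (by omega) j.2,
    sum_range_succ, entryExt_fin]
  ring

theorem sum_range_cornerEntry_col (a : ℕ → ℕ → ℤ) (j k : ℕ) :
    ∑ i ∈ range k, cornerEntry a i j = (a k (j + 1) - a k j) - (a 0 (j + 1) - a 0 j) := by
  rw [← sum_range_sub (fun i => a i (j + 1) - a i j)]
  refine sum_congr rfl fun i _ => ?_
  simp only [cornerEntry]
  ring

theorem entryExt_cornerEntry {n : ℕ} (a : ℕ → ℕ → ℤ) {i j : ℕ} (hi : i < n) (hj : j < n) :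
    entryExt (fun i j : Fin n => cornerEntry a i j) i j = cornerEntry a i j := by
  simp [entryExt, hi, hj]

theorem IsCornerSum.sum_row {n : ℕ} {a : ℕ → ℕ → ℤ} (ha : IsCornerSum n a) {i j : ℕ}
    (hi : i < n) : ∑ k ∈ range j, cornerEntry a i k = a (i + 1) j - a i j := by
  rw [sum_range_cornerEntry, ha.left i (by omega), ha.left (i + 1) (by omega)]
  ring

theorem IsCornerSum.sum_col {n : ℕ} {a : ℕ → ℕ → ℤ} (ha : IsCornerSum n a) {i j : ℕ}
    (hj : j < n) : ∑ k ∈ range i, cornerEntry a k j = a i (j + 1) - a i j := by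
  rw [sum_range_cornerEntry_col, ha.top j (by omega), ha.top (j + 1) (by omega)]
  ring

theorem IsCornerSum.isASM {n : ℕ} {a : ℕ → ℕ → ℤ} (ha : IsCornerSum n a) :
    IsASM (fun i j : Fin n => cornerEntry a i j) := by
  have hr : ∀ i < n, ∀ j ≤ n, ∑ k ∈ range j,
      entryExt (fun i j : Fin n => cornerEntry a i j) i k = a (i + 1) j - a i j := by
    intro i hi j hj
    rw [← ha.sum_row hi]
    exact sum_congr rfl fun k hk => entryExt_cornerEntry a hi (by simp at hk; omega)
  have hc : ∀ j < n, ∀ i ≤ n, ∑ k ∈ range i,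
      entryExt (fun i j : Fin n => cornerEntry a i j) k j = a i (j + 1) - a i j := by
    intro j hj i hi
    rw [← ha.sum_col hj]
    exact sum_congr rfl fun k hk => entryExt_cornerEntry a (by simp at hk; omega) hj
  rw [isASM_iff]
  refine ⟨fun i hi j hj => ?_, fun i hi j hj => ?_, fun i hi j hj => ?_, fun i hi => ?_,
    fun j hj => ?_⟩
  · rw [entryExt_cornerEntry a hi hj]
    exact ha.cornerEntry_cases hi hj
  · rw [hr i hi (j + 1) hj]
    have := ha.block hi hj
    omega
  · rw [hc j hj (i + 1) hi]
    have := ha.block hi hj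
    omega
  · rw [hr i hi _ le_rfl, ha.right i hi.le, ha.right (i + 1) hi]
    push_cast
    ring
  · rw [hc j hj _ le_rfl, ha.bottom j hj.le, ha.bottom (j + 1) hj]
    push_cast
    ring

theorem IsCornerSum.cornerSum_eq {n : ℕ} {a : ℕ → ℕ → ℤ} (ha : IsCornerSum n a) :
    cornerSum (fun i j : Fin n => cornerEntry a i j) = a := by
  funext i j
  by_cases h : i < n + 1 ∧ j < n + 1
  · rw [cornerSum, if_pos h]
    have h1 : ∀ k ∈ range i, ∑ l ∈ range j,
        entryExt (fun i j : Fin n => cornerEntry a i j) k l = a (k + 1) j - a k j := by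
      intro k hk
      rw [mem_range] at hk
      rw [← ha.sum_row (by omega)]
      exact sum_congr rfl fun l hl => entryExt_cornerEntry a (by omega) (by simp at hl; omega)
    rw [sum_congr rfl h1, sum_range_sub (fun k => a k j), ha.top j (by omega), sub_zero]
  · rw [cornerSum, if_neg h, ha.outside i j h]

/-- The code in `Fin 3` of an entry of an ASM. -/
def entryCode (c : ℤ) : Fin 3 := if c = 1 then 2 else if c = 0 then 1 else 0

theorem entryCode_asmMat {n : ℕ} (e : Fin n → Fin n → Fin 3) (i j : Fin n) :
    entryCode (asmMat e i j) = e i j := by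
  rw [asmMat]
  generalize e i j = k
  revert k
  decide

theorem IsCornerSum.asmMat_entryCode {n : ℕ} {a : ℕ → ℕ → ℤ} (ha : IsCornerSum n a) :
    asmMat (fun i j : Fin n => entryCode (cornerEntry a i j)) =
      fun i j : Fin n => cornerEntry a i j := by
  funext i j
  rw [asmMat]
  rcases ha.cornerEntry_cases i.2 j.2 with h | h | h <;> rw [h] <;> rfl

theorem IsCornerSum.nuASM_eq {n : ℕ} {a : ℕ → ℕ → ℤ} (ha : IsCornerSum n a) :
    nuASM (fun i j : Fin n => cornerEntry a i j) = ∑ i ∈ range n, ∑ j ∈ range n,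
      if a i j = a (i + 1) j ∧ a (i + 1) j = a (i + 1) (j + 1) then 1 else 0 := by
  have hv : ∀ i j : Fin n, (∑ i' : Fin n, if i < i' then cornerEntry a i' j else 0) =
      1 - (a (i + 1) (j + 1) - a (i + 1) j) := by
    intro i j
    have h1 : ∑ i' : Fin n, cornerEntry a i' j = 1 := by
      have := ha.isASM.2.2.2.2 j
      exact this
    have h2 := sum_filter_fin_le (fun k => cornerEntry a k j) i
    rw [ha.sum_col j.2, sum_filter] at h2
    rw [← h1, ← h2, ← sum_sub_distrib]
    refine sum_congr rfl fun k _ => ?_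
    by_cases h : i < k
    · rw [if_pos h, if_neg (not_le.2 h), sub_zero]
    · rw [if_neg h, if_pos (not_lt.1 h), sub_self]
  have hr : ∀ i j : Fin n, (∑ j' : Fin n, if j ≤ j' then cornerEntry a i j' else 0) =
      1 - (a (i + 1) j - a i j) := by
    intro i j
    have h1 : ∑ j' : Fin n, cornerEntry a i j' = 1 := by
      have := ha.isASM.2.2.2.1 i
      exact this
    have h2 := sum_filter_fin_le (fun k => cornerEntry a i k) j
    rw [sum_range_succ, ha.sum_row i.2, sum_filter] at h2
    have h3 : cornerEntry a i j = ∑ k : Fin n, if k = j then cornerEntry a i k else 0 := by simp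
    have h4 : a (i + 1) j - a i j = (∑ k : Fin n, if k ≤ j then cornerEntry a i k else 0) -
        ∑ k : Fin n, if k = j then cornerEntry a i k else 0 := by
      rw [h2, ← h3]
      ring
    rw [h4, ← h1, ← sum_sub_distrib, ← sum_sub_distrib]
    refine sum_congr rfl fun k _ => ?_
    rcases lt_trichotomy k j with h | h | h
    · simp [h.le, h.ne, not_le.2 h]
    · simp [h]
    · simp [h.le, h.ne', not_le.2 h]
  have hsum : (∑ i : Fin n, ∑ i' : Fin n, ∑ j : Fin n, ∑ j' : Fin n,
      if i < i' ∧ j' ≤ j then cornerEntry a i j * cornerEntry a i' j' else 0) =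
      ∑ i : Fin n, ∑ j : Fin n,
        (1 - (a (i + 1) (j + 1) - a (i + 1) j)) * (1 - (a (i + 1) j - a i j)) := by
    refine sum_congr rfl fun i _ => ?_
    simp only [← hv i, ← hr i, sum_mul_sum]
    rw [sum_comm' (t' := univ) (s' := fun _ => univ) (by simp)]
    rw [sum_congr rfl fun j _ => sum_comm]
    rw [sum_comm]
    refine sum_congr rfl fun j' _ => ?_
    rw [sum_comm]
    refine sum_congr rfl fun i' _ => sum_congr rfl fun j _ => ?_
    by_cases h1 : i < i' <;> by_cases h2 : j' ≤ j <;> simp [h1, h2, mul_comm]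
  rw [nuASM, hsum]
  have hrange (i : ℕ) := Fin.sum_univ_eq_sum_range
    (fun j => (1 - (a (i + 1) (j + 1) - a (i + 1) j)) * (1 - (a (i + 1) j - a i j))) n
  simp only [hrange]
  rw [Fin.sum_univ_eq_sum_range (fun i => ∑ j ∈ range n,
    (1 - (a (i + 1) (j + 1) - a (i + 1) j)) * (1 - (a (i + 1) j - a i j)))]
  rw [← Int.toNat_natCast (∑ i ∈ range n, ∑ j ∈ range n, _)]
  congr 1
  push_cast
  refine sum_congr rfl fun i hi => sum_congr rfl fun j hj => ?_
  rw [mem_range] at hi hj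
  have hb := ha.block hi hj
  obtain ⟨⟨-, h1⟩, -, h2⟩ := hb
  rcases h1 with h1 | h1 <;> rcases h2 with h2 | h2 <;> rw [h2, h1] <;> simp

theorem muASM_cornerEntry (n : ℕ) (a : ℕ → ℕ → ℤ) :
    muASM (fun i j : Fin n => cornerEntry a i j) = ∑ i ∈ range n, ∑ j ∈ range n,
      if cornerEntry a i j = -1 then 1 else 0 := by
  rw [muASM, card_filter, Fintype.sum_prod_type, Finset.sum_range]
  exact sum_congr rfl fun i _ =>
    Fin.sum_univ_eq_sum_range (fun j => if cornerEntry a i j = -1 then 1 else 0) n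

/-- In a row or column with partial sums `f` increasing from `0` to `1`, the zeros before the
unique `1` are the positions whose partial sum is `0`. -/
theorem card_zeros_before {n : ℕ} {f : ℕ → ℤ} (h0 : f 0 = 0) (hn : f n = 1)
    (hf : ∀ j < n, f (j + 1) = f j ∨ f (j + 1) = f j + 1) :
    (univ.filter (fun j : Fin n => f (j + 1) - f j = 0 ∧
      ∃ j' : Fin n, j < j' ∧ f (j' + 1) - f j' = 1)).card =
      ∑ j ∈ range n, (1 - f (j + 1)).toNat := by
  have hmono : ∀ k l, k ≤ l → l ≤ n → f k ≤ f l := by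
    intro k l hkl
    induction l, hkl using Nat.le_induction with
    | base => exact fun _ => le_rfl
    | succ l _ ih =>
      intro hl
      have := ih (by omega)
      have := hf l (by omega)
      omega
  rw [card_filter, Finset.sum_range]
  refine sum_congr rfl fun j _ => ?_
  have hj := j.2
  have g1 := hmono 0 j (by omega) (by omega)
  have g2 := hmono j ((j : ℕ) + 1) (by omega) (by omega)
  have g3 := hmono ((j : ℕ) + 1) n (by omega) le_rfl
  split_ifs with h
  · obtain ⟨h1, j', hjj, h2⟩ := h
    have := hmono ((j : ℕ) + 1) j' (by rw [Fin.lt_def] at hjj; omega) (by omega)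
    have := hmono ((j' : ℕ) + 1) n (by omega) le_rfl
    omega
  · by_contra hne
    refine h ⟨by omega, ?_⟩
    by_contra hall
    push Not at hall
    have : ∀ l : ℕ, (j : ℕ) + 1 ≤ l → l ≤ n → f l = 0 := by
      intro l hl
      induction l, hl using Nat.le_induction with
      | base => omega
      | succ l hl ih =>
        intro hln
        have h1 := ih (by omega)
        have h2 := hf l (by omega)
        have h3 := hall ⟨l, by omega⟩ (by rw [Fin.lt_def]; simp; omega)
        simp only at h3
        omega
    have := this n (by omega) le_rfl
    omega

theorem IsCornerSum.rhoT_eq {n : ℕ} {a : ℕ → ℕ → ℤ} (ha : IsCornerSum n a) (hn : 0 < n) :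
    rhoT (fun i j : Fin n => cornerEntry a i j) = ∑ j ∈ range n, (1 - a 1 (j + 1)).toNat := by
  rw [← card_zeros_before (f := fun j => a 1 j) (ha.left 1 (by omega))
    (by simpa using ha.right 1 (by omega))
    (fun j hj => by simpa using (ha.block (i := 0) (j := j) (by omega) hj).2.2)]
  have h : ∀ j : Fin n, cornerEntry a 0 j = a 1 (j + 1) - a 1 j := by
    intro j
    rw [cornerEntry, ha.top j (by omega), ha.top (j + 1) (by omega)]
    simp
  simp only [rhoT, h]

theorem IsCornerSum.rhoL_eq {n : ℕ} {a : ℕ → ℕ → ℤ} (ha : IsCornerSum n a) (hn : 0 < n) :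
    rhoL (fun i j : Fin n => cornerEntry a i j) = ∑ i ∈ range n, (1 - a (i + 1) 1).toNat := by
  rw [← card_zeros_before (f := fun i => a i 1) (ha.top 1 (by omega))
    (by simpa using ha.bottom 1 (by omega))
    (fun i hi => by simpa using (ha.block (i := i) (j := 0) hi (by omega)).2.1)]
  have h : ∀ i : Fin n, cornerEntry a i 0 = a (i + 1) 1 - a i 1 := by
    intro i
    rw [cornerEntry, ha.left i (by omega), ha.left (i + 1) (by omega)]
    simp
  simp only [rhoL, h]

theorem prod_boundaryWeight {R : Type*} [CommRing R] (z1 z2 : R) (n : ℕ) (hn : 0 < n)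
    (a : ℕ → ℕ → ℤ) :
    ∏ i ∈ range n, ∏ j ∈ range n, boundaryWeight z1 z2 i j (a (i + 1) (j + 1)) =
      z1 ^ (∑ j ∈ range n, (1 - a 1 (j + 1)).toNat) *
        z2 ^ (∑ i ∈ range n, (1 - a (i + 1) 1).toNat) := by
  simp only [boundaryWeight, prod_mul_distrib, ← prod_pow_eq_pow_sum]
  congr 1
  · rw [prod_comm]
    refine prod_congr rfl fun j _ => ?_
    rw [prod_ite_eq' (range n) 0 (fun i => z1 ^ (1 - a (i + 1) (j + 1)).toNat),
      if_pos (by simpa using hn)]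
  · refine prod_congr rfl fun i _ => ?_
    rw [prod_ite_eq' (range n) 0 (fun j => z2 ^ (1 - a (i + 1) (j + 1)).toNat),
      if_pos (by simpa using hn)]

theorem prod_invWeight {R : Type*} [CommRing R] (x : R) (a : ℕ → ℕ → ℤ) (s t : Finset ℕ) :
    ∏ i ∈ s, ∏ j ∈ t, invWeight x a i j =
      x ^ ∑ i ∈ s, ∑ j ∈ t,
        if a i j = a (i + 1) j ∧ a (i + 1) j = a (i + 1) (j + 1) then 1 else 0 := by
  simp only [← prod_pow_eq_pow_sum, invWeight]
  refine prod_congr rfl fun i _ => prod_congr rfl fun j _ => ?_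
  split_ifs <;> simp

theorem Zadj_eq_cornerGF {R : Type*} [CommRing R] (x z1 z2 : R) (n : ℕ) (hn : 0 < n) :
    Zadj n x (x + 1) z1 z2 = cornerGF x z1 z2 n := by
  classical
  rw [Zadj, Zqua, ← sum_filter, cornerGF]
  refine sum_bij' (fun e _ => cornerSum (asmMat e))
    (fun a _ => fun i j : Fin n => entryCode (cornerEntry a i j)) ?_ ?_ ?_ ?_ ?_
  · intro e he
    exact mem_cornerSums.2 (IsASM.isCornerSum (by simpa using he))
  · intro a ha
    rw [mem_cornerSums] at ha
    simp [ha.asmMat_entryCode, ha.isASM]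
  · intro e he
    funext i j
    rw [cornerEntry_cornerSum, entryCode_asmMat]
  · intro a ha
    rw [mem_cornerSums] at ha
    rw [ha.asmMat_entryCode, ha.cornerSum_eq]
  · intro e he
    have ha : IsCornerSum n (cornerSum (asmMat e)) := IsASM.isCornerSum (by simpa using he)
    have hA : asmMat e = fun i j : Fin n => cornerEntry (cornerSum (asmMat e)) i j := by
      funext i j
      rw [cornerEntry_cornerSum]
    generalize cornerSum (asmMat e) = a at ha hA
    rw [hA, ha.nuASM_eq, muASM_cornerEntry, ha.rhoT_eq hn, ha.rhoL_eq hn]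
    simp only [prod_mul_distrib, prod_invWeight, prod_entryWeight,
      prod_boundaryWeight z1 z2 n hn a, one_pow]
    ring

/-- The adjacent-boundary doubly-refined ASM generating function at `y = x + 1`,
stated for all values of the variables in any commutative ring, equivalently
as an identity of polynomials in `ℤ[x,z1,z2]`. -/
theorem stmt15 {R : Type*} [CommRing R] (x z1 z2 : R) (n : ℕ) (hn : 3 ≤ n) :
    (x * z1 * z2 + z1 + z2 - 1) * Zadj n x (x + 1) z1 z2 =
      z1 * z2 * ((x * z1 + 1) * (x * z2 + 1)) ^ (n - 1) *
          (x + 1) ^ ((n - 2) * (n - 3) / 2)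
      - (z1 - 1) * (z2 - 1) * (x + 1) ^ ((n - 1) * (n - 2) / 2) := by
  obtain ⟨m, rfl⟩ : ∃ m, n = m + 2 := ⟨n - 2, by omega⟩
  rw [Zadj_eq_cornerGF x z1 z2 _ (by omega), mul_cornerGF, Nat.choose_two_right,
    Nat.choose_two_right]
  rfl
end
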